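/- arXiv:1806.08351 — 4 statements merged into one kernel-verified Lean document; each statement's English description precedes it below -/
import Mathlib

section
/- Area–boundary relation for ℓ-reflexive polygons: Let ℓ be a positive integer and Q ⊆ ℝ² an ℓ-reflexive polygon with respect to ℤ². Then ℓ · #(frontier Q ∩ ℤ²) = 2 · area(Q), where area(Q) denotes the two-dimensional Lebesgue measure of Q (a real-number identity). -/
/-!
Every lattice point `p` on the boundary has a successor: walking counterclockwise from `p`, the
boundary follows an edge with primitive inner normal `η = (m, n)` and `⟨η, p⟩ = -ℓ`, and since that
edge ends in a lattice point strictly beyond `p`, it contains `p + e`, where `e = (n, -m)` is the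
primitive edge direction (`exists_step`). The triangle `0, p, p + e` has area `det(p, e) / 2 = ℓ / 2`
(`volume_tri`).

With the side `[0, p + e]` removed, these triangles partition `Q \ {0}`:
they are disjoint (`tri_disjoint`), because a common point has the same height over both edges and
no lattice point lies strictly between `p` and `p + e`; they cover (`exists_mem_tri`), because the
radial projection of a nonzero point of `Q` to the boundary lies on an edge with lattice end points.
Adding up, `area Q` is `ℓ / 2` times the number of boundary lattice points.

The existence of an edge leaving a boundary point counterclockwise (`exists_edge`) is obtained by
tilting a supporting line at the point until it hits another vertex.
-/

open Set

noncomputable section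

abbrev V : Type := ℝ × ℝ

/-- Standard inner product on ℝ². -/
def dotV (x y : V) : ℝ := x.1 * y.1 + x.2 * y.2

/-- The standard lattice ℤ² viewed inside ℝ². -/
def latticePts : Set V := {x : V | ∃ p : ℤ × ℤ, x = ((p.1 : ℝ), (p.2 : ℝ))}

/-- A polygon: convex hull of a finite set of points that affinely spans ℝ². -/
def IsPolygon (Q : Set V) : Prop :=
  ∃ A : Finset V, Q = convexHull ℝ (A : Set V) ∧ affineSpan ℝ (A : Set V) = ⊤

/-- An edge of `Q`: a one-dimensional face, i.e. the argmin set of some nonzero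
linear functional, containing more than one point. -/
def IsEdge (Q F : Set V) : Prop :=
  (∃ η : V, η ≠ 0 ∧ F = {y ∈ Q | ∀ z ∈ Q, dotV η y ≤ dotV η z}) ∧
    ∃ y₁ ∈ F, ∃ y₂ ∈ F, y₁ ≠ y₂

/-- A primitive lattice point: the only lattice points on the segment `conv {0, v}`
are `0` and `v`. -/
def IsPrimitive (v : V) : Prop :=
  v ∈ latticePts ∧ v ≠ 0 ∧ segment ℝ (0 : V) v ∩ latticePts = {(0 : V), v}

/-- An ℓ-reflexive polygon with respect to ℤ². -/
structure IsLReflexive (ℓ : ℕ) (Q : Set V) : Prop where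
  polygon : IsPolygon Q
  vertices_primitive : ∀ v ∈ Set.extremePoints ℝ Q, IsPrimitive v
  zero_mem_interior : (0 : V) ∈ interior Q
  edge_cond : ∀ F, IsEdge Q F →
    ∃ η : V, IsPrimitive η ∧ F ⊆ {y : V | dotV η y = -(ℓ : ℝ)}

/-- The polar polygon `Q° = {x | ⟨x,y⟩ ≥ -1 for all y ∈ Q}`. -/
def polarPolygon (Q : Set V) : Set V := {x : V | ∀ y ∈ Q, -1 ≤ dotV x y}

/-- The dual of an ℓ-reflexive polygon: `Q* = ℓ·Q°`. -/
def dualPolygon (ℓ : ℕ) (Q : Set V) : Set V := (fun x : V => (ℓ : ℝ) • x) '' polarPolygon Q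

/-! ### Determinants, steps along the boundary, and triangles -/

/-- The determinant of the matrix with columns `x` and `y`; it is positive when `y` lies
counterclockwise of `x`. -/
def detV (x y : V) : ℝ := x.1 * y.2 - x.2 * y.1

/-- `(m, n)` is a primitive inner normal of an edge of `Q` at height `-ℓ` which contains `p` and the
next lattice point `p + (n, -m)` in the counterclockwise direction. -/
structure IsStep (ℓ : ℕ) (Q : Set V) (p : V) (m n : ℤ) : Prop where
  coprime : IsCoprime m n
  ge : ∀ y ∈ Q, -(ℓ : ℝ) ≤ m * y.1 + n * y.2
  eq : m * p.1 + n * p.2 = -(ℓ : ℝ)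
  mem : p ∈ Q
  next_mem : (p.1 + n, p.2 - m) ∈ Q

/-- The triangle with vertices `0`, `p` and `p + (n, -m)`, without the side from `0` to
`p + (n, -m)`, cut out by inequalities under the assumption `m p₁ + n p₂ = -ℓ`. -/
def tri (ℓ : ℕ) (p : V) (m n : ℤ) : Set V :=
  {y : V | 0 ≤ detV p y ∧ detV p y < -(m * y.1 + n * y.2) ∧ -(m * y.1 + n * y.2) ≤ (ℓ : ℝ)}

lemma le_of_mem_convexHull {E : Set V} {a b c : ℝ} (h : ∀ y ∈ E, c ≤ a * y.1 + b * y.2) :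
    ∀ y ∈ convexHull ℝ E, c ≤ a * y.1 + b * y.2 := by
  have hc : Convex ℝ {y : V | c ≤ a * y.1 + b * y.2} := by
    apply convex_halfSpace_ge
    constructor
    · intro x y; simp; ring
    · intro k x; simp; ring
  exact fun y hy => convexHull_min h hc hy

/-! ### Primitive vectors -/

lemma isCoprime_of_isPrimitive {m n : ℤ} (h : IsPrimitive ((m : ℝ), (n : ℝ))) :
    IsCoprime m n := by
  obtain ⟨-, h0, hs⟩ := h
  rw [Int.isCoprime_iff_gcd_eq_one]
  have hd0 : Int.gcd m n ≠ 0 := by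
    intro h
    rw [Int.gcd_eq_zero_iff] at h
    exact h0 (by simp [h.1, h.2])
  obtain ⟨a, ha⟩ := Int.gcd_dvd_left m n
  obtain ⟨b, hb⟩ := Int.gcd_dvd_right m n
  set d := Int.gcd m n
  have hdR : (0 : ℝ) < d := by exact_mod_cast Nat.pos_of_ne_zero hd0
  have hd1 : (1 : ℝ) ≤ d := by exact_mod_cast Nat.pos_of_ne_zero hd0
  have haR : (m : ℝ) = d * a := by exact_mod_cast ha
  have hbR : (n : ℝ) = d * b := by exact_mod_cast hb
  -- dividing by the gcd gives a lattice point on the segment from `0` to `(m, n)`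
  have hmem : ((a : ℝ), (b : ℝ)) ∈ segment ℝ (0 : V) ((m : ℝ), (n : ℝ)) ∩ latticePts := by
    refine ⟨⟨1 - 1 / (d : ℝ), 1 / d, ?_, by positivity, by ring, ?_⟩, ⟨(a, b), rfl⟩⟩
    · rw [sub_nonneg, div_le_one hdR]; exact hd1
    · ext <;> simp [haR, hbR] <;> field_simp
  rw [hs] at hmem
  rcases hmem with h | h
  · simp only [Prod.mk_eq_zero] at h
    exact absurd (by simp [haR, hbR, h.1, h.2]) h0
  · simp only [mem_singleton_iff, Prod.mk.injEq] at h
    have h1 : ((d : ℝ) - 1) * a = 0 := by linarith [h.1]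
    have h2 : ((d : ℝ) - 1) * b = 0 := by linarith [h.2]
    by_contra hne
    have hne' : (d : ℝ) - 1 ≠ 0 := by
      intro h; apply hne
      have : (d : ℝ) = 1 := by linarith
      exact_mod_cast this
    have h3 := (mul_eq_zero.1 h1).resolve_left hne'
    have h4 := (mul_eq_zero.1 h2).resolve_left hne'
    exact h0 (by simp [haR, hbR, h3, h4])

/-- If a real multiple of a primitive vector is a lattice vector, then the factor is an integer. -/
lemma int_of_smul {m n c d : ℤ} (h : IsCoprime m n) {s : ℝ} (h1 : s * n = c) (h2 : s * m = d) :
    ∃ k : ℤ, s = k := by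
  obtain ⟨a, b, hab⟩ := h
  refine ⟨a * d + b * c, ?_⟩
  have : (a : ℝ) * m + b * n = 1 := by exact_mod_cast hab
  push_cast
  rw [← h1, ← h2]
  linear_combination -s * this

/-! ### The edges through a boundary point -/

/-- Let `Q` be the convex hull of the finite set `E`. A boundary point `x` lies on an edge
containing a point `a` of `E` strictly counterclockwise of `x` and a point `b` of `E` which is not
strictly counterclockwise of `x`. In the proof, the points of `E` are called vertices. -/
lemma exists_edge {ℓ : ℕ} {Q : Set V} (hQ : IsLReflexive ℓ Q) {E : Finset V}
    (hE : Q = convexHull ℝ (E : Set V)) {x : V} (hx : x ∈ frontier Q) :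
    ∃ m n : ℤ, IsCoprime m n ∧ (∀ y ∈ Q, -(ℓ : ℝ) ≤ m * y.1 + n * y.2) ∧
      m * x.1 + n * x.2 = -(ℓ : ℝ) ∧
      (∃ a ∈ E, m * a.1 + n * a.2 = -(ℓ : ℝ) ∧ 0 < detV x a) ∧
      (∃ b ∈ E, m * b.1 + n * b.2 = -(ℓ : ℝ) ∧ detV x b ≤ 0) := by
  have hconv : Convex ℝ Q := hE ▸ convex_convexHull ℝ _
  have hclosed : IsClosed Q := hE ▸ E.finite_toSet.isClosed_convexHull ℝ
  have hEQ : ∀ a ∈ E, a ∈ Q := fun a ha => hE ▸ subset_convexHull ℝ _ ha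
  have hxQ : x ∈ Q := hclosed.frontier_subset hx
  have h0 := hQ.zero_mem_interior
  -- a supporting functional `f = (f₁, f₂)` at `x`, normalised to `f x = -1`
  obtain ⟨f₁, f₂, hfx, hfQ⟩ : ∃ f₁ f₂ : ℝ, f₁ * x.1 + f₂ * x.2 = -1 ∧
      ∀ y ∈ Q, -1 ≤ f₁ * y.1 + f₂ * y.2 := by
    obtain ⟨f, hf⟩ := geometric_hahn_banach_open_point hconv.interior isOpen_interior hx.2
    have hf0 : 0 < f x := by simpa using hf 0 h0
    have hfQ : ∀ y ∈ Q, f y ≤ f x := by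
      intro y hy
      have hy' : y ∈ closure (interior Q) := by
        rw [hconv.closure_interior_eq_closure_of_nonempty_interior ⟨0, h0⟩]
        exact subset_closure hy
      exact closure_minimal (t := {y | f y ≤ f x}) (fun z hz => (hf z hz).le)
        (isClosed_le f.continuous continuous_const) hy'
    have hfc : ∀ y : V, f y = f (1, 0) * y.1 + f (0, 1) * y.2 := by
      intro y
      have : y = y.1 • ((1 : ℝ), (0 : ℝ)) + y.2 • ((0 : ℝ), (1 : ℝ)) := by ext <;> simp
      conv_lhs => rw [this]
      rw [map_add, map_smul, map_smul, smul_eq_mul, smul_eq_mul]; ring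
    refine ⟨-f (1, 0) / f x, -f (0, 1) / f x, ?_, fun y hy => ?_⟩
    · have := hfc x
      field_simp
      linarith
    · have h1 := hfc y
      have h2 := hfQ y hy
      have : -f (1, 0) / f x * y.1 + -f (0, 1) / f x * y.2 = -(f y / f x) := by
        rw [h1]; ring
      rw [this, neg_le_neg_iff, div_le_one hf0]
      exact h2
  have hx0 : 0 < x.1 ^ 2 + x.2 ^ 2 := by
    by_contra h
    have h1 : x.1 = 0 := by nlinarith [sq_nonneg x.1, sq_nonneg x.2]
    have h2 : x.2 = 0 := by nlinarith [sq_nonneg x.1, sq_nonneg x.2]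
    rw [h1, h2] at hfx
    norm_num at hfx
  -- some vertex is strictly counterclockwise of `x`, since `0` is an interior point
  have hne : (E.filter fun a => 0 < detV x a).Nonempty := by
    by_contra hemp
    rw [Finset.not_nonempty_iff_eq_empty, Finset.filter_eq_empty_iff] at hemp
    have hneg : ∀ y ∈ Q, 0 ≤ x.2 * y.1 + -x.1 * y.2 := by
      rw [hE]
      apply le_of_mem_convexHull
      intro a ha
      have := hemp ha
      unfold detV at this
      linarith
    have hcont : Filter.Tendsto (fun t : ℝ => (-t * x.2, t * x.1)) (nhds 0) (nhds (0 : V)) := by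
      have : Continuous (fun t : ℝ => ((-t * x.2, t * x.1) : V)) := by fun_prop
      have h := this.tendsto 0
      simp only [neg_zero, zero_mul] at h
      exact h
    have hev := hcont.eventually (mem_interior_iff_mem_nhds.1 h0)
    obtain ⟨t, ht, htpos⟩ := ((hev.filter_mono nhdsWithin_le_nhds).and
      (self_mem_nhdsWithin : Ioi (0 : ℝ) ∈ nhdsWithin 0 (Ioi 0))).exists
    have h1 := hneg _ ht
    have h2 : 0 < t * (x.1 ^ 2 + x.2 ^ 2) := mul_pos htpos hx0
    simp only at h1
    nlinarith
  -- tilt the supporting line around `x` until it meets a vertex `a`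
  obtain ⟨a, ha, hamin⟩ := Finset.exists_min_image _
    (fun a : V => (f₁ * a.1 + f₂ * a.2 + 1) / detV x a) hne
  rw [Finset.mem_filter] at ha
  obtain ⟨haE, hda⟩ := ha
  obtain ⟨t, ht⟩ : ∃ t, t = (f₁ * a.1 + f₂ * a.2 + 1) / detV x a := ⟨_, rfl⟩
  have ht0 : 0 ≤ t := by
    rw [ht]
    exact div_nonneg (by linarith [hfQ a (hEQ a haE)]) hda.le
  obtain ⟨g, hg⟩ : ∃ g : V, g = (f₁ + t * x.2, f₂ - t * x.1) := ⟨_, rfl⟩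
  have hgy : ∀ y : V, dotV g y = f₁ * y.1 + f₂ * y.2 - t * detV x y := by
    intro y; simp only [hg, dotV, detV]; ring
  have hgx : dotV g x = -1 := by
    rw [hgy, hfx]; unfold detV; ring
  have hga : dotV g a = -1 := by
    rw [hgy, ht, div_mul_cancel₀ _ hda.ne']; ring
  have hgQ : ∀ y ∈ Q, -1 ≤ dotV g y := by
    unfold dotV
    rw [hE]
    apply le_of_mem_convexHull
    intro b hb
    change -1 ≤ dotV g b
    rw [hgy]
    have hfb := hfQ b (hEQ b hb)
    by_cases hdb : 0 < detV x b
    · have := hamin b (Finset.mem_filter.2 ⟨Finset.mem_coe.1 hb, hdb⟩)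
      rw [← ht, le_div_iff₀ hdb] at this
      linarith
    · have := mul_nonneg ht0 (neg_nonneg.2 (not_lt.1 hdb))
      linarith
  -- the corresponding edge and its primitive normal
  obtain ⟨η, hη, hηF⟩ := hQ.edge_cond {y ∈ Q | ∀ z ∈ Q, dotV g y ≤ dotV g z} (by
    refine ⟨⟨g, ?_, rfl⟩, x, ⟨hxQ, fun z hz => ?_⟩, a, ⟨hEQ a haE, fun z hz => ?_⟩, ?_⟩
    · rintro rfl; simp [dotV] at hgx
    · rw [hgx]; exact hgQ z hz
    · rw [hga]; exact hgQ z hz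
    · rintro rfl; unfold detV at hda; linarith)
  have hηx : dotV η x = -ℓ := hηF ⟨hxQ, fun z hz => by rw [hgx]; exact hgQ z hz⟩
  have hηa : dotV η a = -ℓ := hηF ⟨hEQ a haE, fun z hz => by rw [hga]; exact hgQ z hz⟩
  obtain ⟨⟨m, n⟩, rfl⟩ := hη.1
  unfold dotV at hηx hηa hgx hga hgQ
  simp only at hηx hηa
  -- the two functionals are proportional, as they agree up to scaling on the basis `x`, `a`
  have hm : (m : ℝ) = ℓ * g.1 := by
    apply mul_right_cancel₀ hda.ne'
    unfold detV
    linear_combination a.2 * hηx - x.2 * hηa - ℓ * a.2 * hgx + ℓ * x.2 * hga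
  have hn : (n : ℝ) = ℓ * g.2 := by
    apply mul_right_cancel₀ hda.ne'
    unfold detV
    linear_combination x.1 * hηa - a.1 * hηx - ℓ * x.1 * hga + ℓ * a.1 * hgx
  have hηQ : ∀ y ∈ Q, -(ℓ : ℝ) ≤ m * y.1 + n * y.2 := by
    intro y hy
    have := mul_le_mul_of_nonneg_left (hgQ y hy) (Nat.cast_nonneg (α := ℝ) ℓ)
    rw [hm, hn]
    linarith
  refine ⟨m, n, isCoprime_of_isPrimitive hη, hηQ, hηx, ⟨a, haE, hηa, hda⟩, ?_⟩
  -- `x` is a convex combination of vertices; only vertices on the edge carry positive weight, and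
  -- the weighted sum of the determinants is `det(x, x) = 0`
  by_contra! hno
  have hxE : x ∈ convexHull ℝ (E : Set V) := hE ▸ hxQ
  rw [Finset.mem_convexHull'] at hxE
  obtain ⟨w, hw0, hw1, hwx⟩ := hxE
  have e1 : ∑ y ∈ E, w y * y.1 = x.1 := by
    rw [← hwx, Prod.fst_sum]; simp
  have e2 : ∑ y ∈ E, w y * y.2 = x.2 := by
    rw [← hwx, Prod.snd_sum]; simp
  have s1 : ∑ y ∈ E, w y * (m * y.1 + n * y.2 + ℓ) = 0 := by
    have : ∀ y : V, w y * (m * y.1 + n * y.2 + ℓ) =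
        m * (w y * y.1) + n * (w y * y.2) + ℓ * w y := fun y => by ring
    simp only [this, Finset.sum_add_distrib, ← Finset.mul_sum, e1, e2, hw1]
    linarith
  have s2 : ∑ y ∈ E, w y * detV x y = 0 := by
    have : ∀ y : V, w y * detV x y = x.1 * (w y * y.2) - x.2 * (w y * y.1) :=
      fun y => by unfold detV; ring
    simp only [this, Finset.sum_sub_distrib, ← Finset.mul_sum, e1, e2]
    ring
  rw [Finset.sum_eq_zero_iff_of_nonneg fun y hy =>
    mul_nonneg (hw0 y hy) (by linarith [hηQ y (hEQ y hy)])] at s1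
  have hpos : ∀ y ∈ E, 0 ≤ w y * detV x y := by
    intro y hy
    rcases mul_eq_zero.1 (s1 y hy) with h | h
    · simp [h]
    · exact mul_nonneg (hw0 y hy) (hno y hy (by linarith)).le
  rw [Finset.sum_eq_zero_iff_of_nonneg hpos] at s2
  have hall : ∀ y ∈ E, w y = 0 := by
    intro y hy
    rcases mul_eq_zero.1 (s2 y hy) with h | h
    · exact h
    · rcases mul_eq_zero.1 (s1 y hy) with h' | h'
      · exact h'
      · exact absurd h (hno y hy (by linarith)).ne'
  rw [Finset.sum_eq_zero hall] at hw1
  exact zero_ne_one hw1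

/-- A point of the line `⟨(m, n), ·⟩ = -ℓ` is determined by its determinant with another one. -/
lemma eq_add_smul {ℓ : ℝ} (hℓ : 0 < ℓ) {m n : ℝ} {x a : V} (hx : m * x.1 + n * x.2 = -ℓ)
    (ha : m * a.1 + n * a.2 = -ℓ) :
    a.1 = x.1 + detV x a / ℓ * n ∧ a.2 = x.2 - detV x a / ℓ * m := by
  unfold detV
  constructor
  · field_simp
    linear_combination a.1 * hx - x.1 * ha
  · field_simp
    linear_combination a.2 * hx - x.2 * ha

/-- If `p` and `p + s e` with `s ≥ 1` lie in `Q`, then so does `p + e`. -/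
lemma next_mem_of {Q : Set V} (hQ : Convex ℝ Q) {p a : V} {u v s : ℝ} (hs : 1 ≤ s) (hp : p ∈ Q)
    (ha : a ∈ Q) (h1 : a.1 = p.1 + s * u) (h2 : a.2 = p.2 - s * v) :
    (p.1 + u, p.2 - v) ∈ Q := by
  have hs0 : 0 < s := by linarith
  have := hQ hp ha (a := 1 - 1 / s) (b := 1 / s)
    (by rw [sub_nonneg, div_le_one hs0]; exact hs) (by positivity) (by ring)
  convert this using 1
  ext
  · simp [h1]; field_simp; ring
  · simp [h2]; field_simp; ring

/-- Every boundary lattice point has a next boundary lattice point in counterclockwise direction. -/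
lemma exists_step {ℓ : ℕ} (hℓ : 0 < ℓ) {Q : Set V} (hQ : IsLReflexive ℓ Q) {E : Finset V}
    (hE : Q = convexHull ℝ (E : Set V)) (hEl : ∀ a ∈ E, a ∈ latticePts) {p : V}
    (hp : p ∈ frontier Q ∩ latticePts) : ∃ m n : ℤ, IsStep ℓ Q p m n := by
  have hconv : Convex ℝ Q := hE ▸ convex_convexHull ℝ _
  have hclosed : IsClosed Q := hE ▸ E.finite_toSet.isClosed_convexHull ℝ
  have hpQ := hclosed.frontier_subset hp.1
  obtain ⟨m, n, hc, hge, heq, ⟨a, haE, hma, hda⟩, -⟩ := exists_edge hQ hE hp.1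
  have hℓR : (0 : ℝ) < ℓ := by exact_mod_cast hℓ
  refine ⟨m, n, hc, hge, heq, hpQ, ?_⟩
  obtain ⟨h1, h2⟩ := eq_add_smul hℓR heq hma
  obtain ⟨⟨a1, a2⟩, rfl⟩ := hEl a haE
  obtain ⟨⟨p1, p2⟩, rfl⟩ := hp.2
  set s := detV ((p1 : ℝ), (p2 : ℝ)) ((a1 : ℝ), (a2 : ℝ)) / ℓ with hs
  have hs0 : 0 < s := div_pos hda hℓR
  obtain ⟨k, hk⟩ := int_of_smul (c := a1 - p1) (d := p2 - a2) hc (s := s)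
    (by push_cast; simp only at h1; linarith) (by push_cast; simp only at h2; linarith)
  have hk1 : 1 ≤ s := by
    rw [hk] at hs0 ⊢
    have : (0 : ℤ) < k := by exact_mod_cast hs0
    exact_mod_cast this
  exact next_mem_of hconv hk1 hpQ (hE ▸ subset_convexHull ℝ _ haE) h1 h2

/-- Two lines at the same height `-ℓ` through `p` with parallel normals have equal normals. -/
lemma normal_unique {ℓ m n m' n' : ℝ} (hℓ : 0 < ℓ) {p : V} (h : m * p.1 + n * p.2 = -ℓ)
    (h' : m' * p.1 + n' * p.2 = -ℓ) (h0 : m' * n - n' * m = 0) : m' = m ∧ n' = n := by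
  constructor <;> apply mul_left_cancel₀ hℓ.ne'
  · linear_combination m' * h - m * h' - p.2 * h0
  · linear_combination n' * h - n * h' + p.1 * h0

/-- The normal of the edge leaving `p` counterclockwise is determined by `p`. -/
lemma IsStep.unique {ℓ : ℕ} (hℓ : 0 < ℓ) {Q : Set V} {p : V} {m n m' n' : ℤ}
    (h : IsStep ℓ Q p m n) (h' : IsStep ℓ Q p m' n') : m' = m ∧ n' = n := by
  have hℓR : (0 : ℝ) < ℓ := by exact_mod_cast hℓ
  have h1 := h'.ge _ h.next_mem
  have h2 := h.ge _ h'.next_mem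
  have e := h.eq
  have e' := h'.eq
  simp only at h1 h2
  have := normal_unique hℓR e e' (by nlinarith)
  exact_mod_cast this

/-! ### The triangles partition the punctured polygon -/

lemma tri_subset {ℓ : ℕ} (hℓ : 0 < ℓ) {Q : Set V} (hconv : Convex ℝ Q) (h0 : (0 : V) ∈ Q)
    {p : V} {m n : ℤ} (h : IsStep ℓ Q p m n) : tri ℓ p m n ⊆ Q \ {0} := by
  rintro y ⟨hy1, hy2, hy3⟩
  have hℓR : (0 : ℝ) < ℓ := by exact_mod_cast hℓ
  refine ⟨?_, ?_⟩
  · obtain ⟨v, hv⟩ : ∃ v, v = detV p y := ⟨_, rfl⟩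
    obtain ⟨u, hu⟩ : ∃ u, u = -(m * y.1 + n * y.2) := ⟨_, rfl⟩
    rw [← hv] at hy1 hy2
    rw [← hu] at hy2 hy3
    have key := hconv.sum_mem (t := Finset.univ) (w := ![(u - v) / ℓ, v / ℓ, (ℓ - u) / ℓ])
      (z := ![p, (p.1 + n, p.2 - m), 0])
      (by
        intro i _
        fin_cases i
        · exact div_nonneg (by linarith) hℓR.le
        · exact div_nonneg (by linarith) hℓR.le
        · exact div_nonneg (by linarith) hℓR.le)
      (by simp [Fin.sum_univ_three]; field_simp; ring)
      (by
        intro i _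
        fin_cases i
        · exact h.mem
        · exact h.next_mem
        · exact h0)
    convert key using 1
    have e := h.eq
    ext
    · simp [Fin.sum_univ_three]; field_simp
      rw [hv, hu]; unfold detV
      linear_combination y.1 * e
    · simp [Fin.sum_univ_three]; field_simp
      rw [hv, hu]; unfold detV
      linear_combination y.2 * e
  · rintro rfl
    simp [detV] at hy2

/-- Disjointness when the common point `y` does not lie on the ray through `p`, given that both
normals take the same value at `y` and that `p` lies on the edge at `q`. -/
lemma tri_disjoint_aux {ℓ : ℕ} (hℓ : 0 < ℓ) {Q : Set V} {p q : V} {m n m' n' : ℤ}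
    (hp : p ∈ latticePts) (hq : q ∈ latticePts)
    (h : IsStep ℓ Q p m n) (h' : IsStep ℓ Q q m' n') {y : V}
    (hy : y ∈ tri ℓ p m n) (hy' : y ∈ tri ℓ q m' n')
    (hu : m * y.1 + n * y.2 = m' * y.1 + n' * y.2)
    (hmp : m' * p.1 + n' * p.2 = -(ℓ : ℝ)) (hv : 0 < detV p y) : p = q := by
  have hℓR : (0 : ℝ) < ℓ := by exact_mod_cast hℓ
  obtain ⟨hy1, hy2, hy3⟩ := hy
  obtain ⟨hz1, hz2, hz3⟩ := hy'
  have e := h.eq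
  have e' := h'.eq
  -- the second functional vanishes on the direction of the first edge, so the normals coincide
  have h0 : (m' : ℝ) * n - n' * m = 0 := by
    have : detV p y * ((m' : ℝ) * n - n' * m) = 0 := by
      unfold detV
      linear_combination -(m' * y.1 + n' * y.2) * e + (m * y.1 + n * y.2) * hmp - ℓ * hu
    exact (mul_eq_zero.1 this).resolve_left hv.ne'
  obtain ⟨hm, hn⟩ := normal_unique hℓR e hmp h0
  rw [hm, hn] at e' hz2 hz3
  obtain ⟨h1, h2⟩ := eq_add_smul hℓR e e'
  set s := detV p q / ℓ with hs
  obtain ⟨⟨p1, p2⟩, rfl⟩ := hp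
  obtain ⟨⟨q1, q2⟩, rfl⟩ := hq
  simp only at h1 h2
  obtain ⟨k, hk⟩ := int_of_smul (c := q1 - p1) (d := p2 - q2) h.coprime (s := s)
    (by push_cast; linarith) (by push_cast; linarith)
  -- `s` is the difference of two numbers in `[0, 1)`, hence zero
  have hdiff : detV ((p1 : ℝ), (p2 : ℝ)) y - detV ((q1 : ℝ), (q2 : ℝ)) y
      = s * -(m * y.1 + n * y.2) := by
    unfold detV
    simp only [h1, h2]
    ring
  have hupos : 0 < -(m * y.1 + n * y.2) := by linarith
  have hlt : s < 1 := by
    by_contra! hc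
    nlinarith
  have hgt : -1 < s := by
    by_contra! hc
    nlinarith
  rw [hk] at hlt hgt
  have hk0 : k = 0 := by
    have a1 : k < 1 := by exact_mod_cast hlt
    have a2 : -1 < k := by exact_mod_cast hgt
    omega
  rw [hk, hk0] at h1 h2
  ext
  · simp [h1]
  · simp [h2]

/-- On the triangle at `p`, the functional `(m, n)` is minimal among all functionals that are at
least `-ℓ` on `Q`; one which agrees with it at a point of the triangle attains `-ℓ` at `p`. -/
lemma tri_height {ℓ : ℕ} (hℓ : 0 < ℓ) {Q : Set V} {p : V} {m n m' n' : ℤ}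
    (h : IsStep ℓ Q p m n) (h' : ∀ y ∈ Q, -(ℓ : ℝ) ≤ m' * y.1 + n' * y.2) {y : V}
    (hy : y ∈ tri ℓ p m n) : m * y.1 + n * y.2 ≤ m' * y.1 + n' * y.2 ∧
      (m * y.1 + n * y.2 = m' * y.1 + n' * y.2 → m' * p.1 + n' * p.2 = -(ℓ : ℝ)) := by
  have hℓR : (0 : ℝ) < ℓ := by exact_mod_cast hℓ
  obtain ⟨hy1, hy2, hy3⟩ := hy
  have e := h.eq
  have a1 := h' _ h.mem
  have a2 := h' _ h.next_mem
  simp only at a2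
  -- `ℓ y = (u - v) p + v (p + e)` with `v = det(p, y)` and `u` the height of `y`
  have key : ℓ * ((m' * y.1 + n' * y.2) - (m * y.1 + n * y.2)) =
      (-(m * y.1 + n * y.2) - detV p y) * (m' * p.1 + n' * p.2 + ℓ) +
        detV p y * (m' * (p.1 + n) + n' * (p.2 - m) + ℓ) := by
    unfold detV
    linear_combination (m' * y.1 + n' * y.2) * e
  have b1 := mul_nonneg (sub_nonneg.2 hy2.le)
    (by linarith : 0 ≤ (m' * p.1 + n' * p.2 + ℓ : ℝ))
  have b2 := mul_nonneg hy1 (by linarith : 0 ≤ (m' * (p.1 + n) + n' * (p.2 - m) + ℓ : ℝ))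
  constructor
  · nlinarith
  · intro heq
    rw [heq, sub_self, mul_zero] at key
    rw [heq] at b1 hy2
    have : (-(m' * y.1 + n' * y.2) - detV p y) * (m' * p.1 + n' * p.2 + ℓ) = 0 := by linarith
    rcases mul_eq_zero.1 this with hh | hh <;> linarith

lemma tri_disjoint {ℓ : ℕ} (hℓ : 0 < ℓ) {Q : Set V} {p q : V} {m n m' n' : ℤ}
    (hp : p ∈ latticePts) (hq : q ∈ latticePts)
    (h : IsStep ℓ Q p m n) (h' : IsStep ℓ Q q m' n') {y : V}
    (hy : y ∈ tri ℓ p m n) (hy' : y ∈ tri ℓ q m' n') : p = q := by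
  have hℓR : (0 : ℝ) < ℓ := by exact_mod_cast hℓ
  obtain ⟨k1, k2⟩ := tri_height hℓ h h'.ge hy
  obtain ⟨k1', k2'⟩ := tri_height hℓ h' h.ge hy'
  have hu := le_antisymm k1 k1'
  rcases hy.1.lt_or_eq with hv | hv
  · exact tri_disjoint_aux hℓ hp hq h h' hy hy' hu (k2 hu) hv
  rcases hy'.1.lt_or_eq with hv' | hv'
  · exact (tri_disjoint_aux hℓ hq hp h' h hy' hy hu.symm (k2' hu.symm) hv').symm
  -- otherwise `y` is a positive multiple of both `p` and `q`, with the same factor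
  have hupos : -(m * y.1 + n * y.2) ≠ 0 := (lt_of_le_of_lt hy.1 hy.2.1).ne'
  have e := h.eq
  have e' := h'.eq
  unfold detV at hv hv'
  ext <;> apply mul_left_cancel₀ hupos
  · linear_combination y.1 * e' - y.1 * e + n * hv - n' * hv' + q.1 * hu
  · linear_combination y.2 * e' - y.2 * e - m * hv + m' * hv' + q.2 * hu

lemma mem_frontier_of_eq {ℓ : ℕ} (hℓ : 0 < ℓ) {Q : Set V} {m n : ℝ} {p : V} (hp : p ∈ Q)
    (hge : ∀ y ∈ Q, -(ℓ : ℝ) ≤ m * y.1 + n * y.2) (heq : m * p.1 + n * p.2 = -(ℓ : ℝ)) :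
    p ∈ frontier Q := by
  have hℓR : (0 : ℝ) < ℓ := by exact_mod_cast hℓ
  refine ⟨subset_closure hp, fun hint => ?_⟩
  have hcont : Filter.Tendsto (fun t : ℝ => t • p) (nhds 1) (nhds p) := by
    have : Continuous (fun t : ℝ => t • p) := by fun_prop
    simpa using this.tendsto 1
  have hev := hcont.eventually (mem_interior_iff_mem_nhds.1 hint)
  obtain ⟨t, ht, htpos⟩ := ((hev.filter_mono nhdsWithin_le_nhds).and
    (self_mem_nhdsWithin : Ioi (1 : ℝ) ∈ nhdsWithin 1 (Ioi 1))).exists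
  have h1 := hge _ ht
  simp only [Prod.smul_fst, Prod.smul_snd, smul_eq_mul] at h1 htpos
  nlinarith

/-- Every nonzero point of `Q` lies in the triangle of some boundary lattice point. -/
lemma exists_mem_tri {ℓ : ℕ} (hℓ : 0 < ℓ) {Q : Set V} (hQ : IsLReflexive ℓ Q) {E : Finset V}
    (hE : Q = convexHull ℝ (E : Set V)) (hEl : ∀ a ∈ E, a ∈ latticePts) {y : V}
    (hy : y ∈ Q) (hy0 : y ≠ 0) :
    ∃ p ∈ frontier Q ∩ latticePts, ∃ m n : ℤ, IsStep ℓ Q p m n ∧ y ∈ tri ℓ p m n := by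
  have hℓR : (0 : ℝ) < ℓ := by exact_mod_cast hℓ
  have hconv : Convex ℝ Q := hE ▸ convex_convexHull ℝ _
  have hcomp : IsCompact Q := hE ▸ E.finite_toSet.isCompact_convexHull ℝ
  have hnhds : Q ∈ nhds 0 := mem_interior_iff_mem_nhds.1 hQ.zero_mem_interior
  -- the radial projection `x` of `y` to the boundary
  obtain ⟨g, x, hg0, hg1, hx, rfl⟩ : ∃ g : ℝ, ∃ x : V, 0 < g ∧ g ≤ 1 ∧ x ∈ frontier Q ∧
      g • x = y := by
    have hpos : 0 < gauge Q y := (gauge_pos (absorbent_nhds_zero hnhds)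
      (NormedSpace.isVonNBounded_of_isBounded ℝ hcomp.isBounded)).2 hy0
    refine ⟨gauge Q y, (gauge Q y)⁻¹ • y, hpos, gauge_le_one_of_mem hy, ?_, ?_⟩
    · rw [← gauge_eq_one_iff_mem_frontier hconv hnhds,
        gauge_smul_of_nonneg (inv_nonneg.2 hpos.le), smul_eq_mul, inv_mul_cancel₀ hpos.ne']
    · rw [smul_smul, mul_inv_cancel₀ hpos.ne', one_smul]
  obtain ⟨m, n, hc, hge, heq, ⟨a, haE, hma, hda⟩, ⟨b, hbE, hmb, hdb⟩⟩ := exists_edge hQ hE hx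
  have hxQ := hcomp.isClosed.frontier_subset hx
  have haQ : a ∈ Q := hE ▸ subset_convexHull ℝ _ haE
  have hbQ : b ∈ Q := hE ▸ subset_convexHull ℝ _ hbE
  obtain ⟨a1, a2⟩ := eq_add_smul hℓR heq hma
  obtain ⟨b1, b2⟩ := eq_add_smul hℓR heq hmb
  obtain ⟨s, hs⟩ : ∃ s, s = detV x a / ℓ := ⟨_, rfl⟩
  obtain ⟨r, hr⟩ : ∃ r, r = -(detV x b / ℓ) := ⟨_, rfl⟩
  have hs0 : 0 < s := hs ▸ div_pos hda hℓR
  have hr0 : 0 ≤ r := by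
    rw [hr, ← neg_div]; exact div_nonneg (by linarith) hℓR.le
  rw [← hs] at a1 a2
  rw [← neg_eq_iff_eq_neg.2 hr] at b1 b2
  obtain ⟨⟨α1, α2⟩, hα⟩ := hEl a haE
  obtain ⟨⟨β1, β2⟩, hβ⟩ := hEl b hbE
  have hfl := Int.floor_le r
  have hfl' := Int.lt_floor_add_one r
  -- `a` is an integral number of steps away from `b`, so the lattice point preceding `x` on the
  -- edge is followed by another one not beyond `a`
  obtain ⟨k, hk⟩ := int_of_smul (c := α1 - β1) (d := β2 - α2) hc (s := s + r)
    (by push_cast; rw [hα] at a1; rw [hβ] at b1; simp only at a1 b1; linarith)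
    (by push_cast; rw [hα] at a2; rw [hβ] at b2; simp only at a2 b2; linarith)
  have hk1 : (⌊r⌋ : ℝ) + 1 ≤ k := by
    have h1 : (⌊r⌋ : ℝ) < k := by linarith
    have h2 : ⌊r⌋ < k := by exact_mod_cast h1
    exact_mod_cast h2
  obtain ⟨p, hp⟩ : ∃ p : V, p = (b.1 + ⌊r⌋ * n, b.2 - ⌊r⌋ * m) := ⟨_, rfl⟩
  have hp1 : p.1 = b.1 + ⌊r⌋ * n := by rw [hp]
  have hp2 : p.2 = b.2 - ⌊r⌋ * m := by rw [hp]
  have hpl : p ∈ latticePts := by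
    refine ⟨(β1 + ⌊r⌋ * n, β2 - ⌊r⌋ * m), ?_⟩
    rw [hp, hβ]; push_cast; rfl
  have hpeq : m * p.1 + n * p.2 = -(ℓ : ℝ) := by
    rw [hp1, hp2]; linear_combination hmb
  have hpQ : p ∈ Q := by
    rcases (Int.floor_nonneg.2 hr0).eq_or_lt with h | h
    · have : p = b := by ext <;> simp [hp1, hp2, ← h]
      rw [this]; exact hbQ
    · have hfpos : (0 : ℝ) < ⌊r⌋ := by exact_mod_cast h
      rw [hp]
      refine next_mem_of (s := (s + r) / ⌊r⌋) hconv ?_ hbQ haQ ?_ ?_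
      · rw [one_le_div hfpos]; linarith
      · field_simp; linarith
      · field_simp; linarith
  have hpn : (p.1 + n, p.2 - m) ∈ Q := by
    refine next_mem_of (s := s + r - ⌊r⌋) hconv (by linarith) hpQ haQ ?_ ?_
    · rw [hp1]; linarith
    · rw [hp2]; linarith
  refine ⟨p, ⟨mem_frontier_of_eq hℓ hpQ hge hpeq, hpl⟩, m, n, ⟨hc, hge, hpeq, hpQ, hpn⟩, ?_⟩
  have hdet : detV p (g • x) = g * (r - ⌊r⌋) * ℓ := by
    unfold detV
    simp only [Prod.smul_fst, Prod.smul_snd, smul_eq_mul, hp1, hp2]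
    linear_combination g * x.2 * b1 - g * x.1 * b2 - g * (r - ⌊r⌋) * heq
  have hht : -(m * (g • x).1 + n * (g • x).2) = g * ℓ := by
    simp only [Prod.smul_fst, Prod.smul_snd, smul_eq_mul]
    linear_combination -g * heq
  have hgl : 0 < g * ℓ := mul_pos hg0 hℓR
  refine ⟨?_, ?_, ?_⟩
  · rw [hdet]
    exact mul_nonneg (mul_nonneg hg0.le (by linarith)) hℓR.le
  · rw [hdet, hht]
    nlinarith
  · rw [hht]
    nlinarith

/-! ### Area of a triangle -/

lemma volume_std (c : ℝ) (hc : 0 ≤ c) :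
    MeasureTheory.volume {z : V | 0 ≤ z.2 ∧ z.2 < z.1 ∧ z.1 ≤ c} = ENNReal.ofReal (c ^ 2 / 2) := by
  have hms : MeasurableSet {z : V | 0 ≤ z.2 ∧ z.2 < z.1 ∧ z.1 ≤ c} := by
    refine (measurableSet_le measurable_const measurable_snd).inter
      ((measurableSet_lt measurable_snd measurable_fst).inter
        (measurableSet_le measurable_fst measurable_const))
  rw [MeasureTheory.Measure.volume_eq_prod, MeasureTheory.Measure.prod_apply hms]
  have : ∀ u : ℝ, MeasureTheory.volume (Prod.mk u ⁻¹' {z : V | 0 ≤ z.2 ∧ z.2 < z.1 ∧ z.1 ≤ c}) =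
      (Ioc 0 c).indicator (fun u => ENNReal.ofReal u) u := by
    intro u
    by_cases hu : u ∈ Ioc 0 c
    · rw [indicator_of_mem hu]
      have : Prod.mk u ⁻¹' {z : V | 0 ≤ z.2 ∧ z.2 < z.1 ∧ z.1 ≤ c} = Ico 0 u := by
        ext v; simp [hu.2]
      rw [this, Real.volume_Ico, sub_zero]
    · rw [indicator_of_notMem hu]
      have : Prod.mk u ⁻¹' {z : V | 0 ≤ z.2 ∧ z.2 < z.1 ∧ z.1 ≤ c} = ∅ := by
        ext v
        simp only [mem_preimage, mem_ofPred_eq, mem_empty_iff_false, iff_false]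
        rintro ⟨h1, h2, h3⟩
        exact hu ⟨by linarith, h3⟩
      rw [this, MeasureTheory.measure_empty]
  simp_rw [this]
  rw [MeasureTheory.lintegral_indicator measurableSet_Ioc,
    ← MeasureTheory.ofReal_integral_eq_lintegral_ofReal]
  · rw [← intervalIntegral.integral_of_le hc, integral_id]
    simp
  · exact (continuous_id.integrableOn_Icc (a := 0) (b := c)).mono_set Ioc_subset_Icc_self
  · filter_upwards [MeasureTheory.ae_restrict_mem measurableSet_Ioc] with u hu
    exact hu.1.le

/-- The triangle is the preimage of a standard one under a linear map of determinant `ℓ`. -/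
lemma volume_tri {ℓ : ℕ} (hℓ : 0 < ℓ) {p : V} {m n : ℤ} (h : m * p.1 + n * p.2 = -(ℓ : ℝ)) :
    MeasureTheory.volume (tri ℓ p m n) = ENNReal.ofReal (ℓ / 2) := by
  have hℓR : (0 : ℝ) < ℓ := by exact_mod_cast hℓ
  let L : V →ₗ[ℝ] V := Matrix.toLin (Module.Basis.finTwoProd ℝ) (Module.Basis.finTwoProd ℝ)
    !![-(m : ℝ), -(n : ℝ); -p.2, p.1]
  have hL : ∀ y, L y = (-(m : ℝ) * y.1 + -(n : ℝ) * y.2, -p.2 * y.1 + p.1 * y.2) :=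
    fun y => Matrix.toLin_finTwoProd_apply _ _ _ _ y
  have hdet : LinearMap.det L = ℓ := by
    rw [LinearMap.det_toLin, Matrix.det_fin_two_of]
    linarith
  have hpre : tri ℓ p m n = L ⁻¹' {z : V | 0 ≤ z.2 ∧ z.2 < z.1 ∧ z.1 ≤ (ℓ : ℝ)} := by
    ext y
    have h1 : -p.2 * y.1 + p.1 * y.2 = detV p y := by unfold detV; ring
    have h2 : -(m : ℝ) * y.1 + -(n : ℝ) * y.2 = -(m * y.1 + n * y.2) := by ring
    simp only [tri, mem_preimage, mem_ofPred_eq, hL, h1, h2]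
  rw [hpre, MeasureTheory.Measure.addHaar_preimage_linearMap _ (by rw [hdet]; exact hℓR.ne'),
    hdet, volume_std _ hℓR.le, ← ENNReal.ofReal_mul (abs_nonneg _), abs_of_pos (inv_pos.2 hℓR)]
  congr 1
  field_simp

lemma measurableSet_tri (ℓ : ℕ) (p : V) (m n : ℤ) : MeasurableSet (tri ℓ p m n) := by
  have h1 : Measurable fun y : V => detV p y := by unfold detV; fun_prop
  have h2 : Measurable fun y : V => -(m * y.1 + n * y.2) := by fun_prop
  exact (measurableSet_le measurable_const h1).inter
    ((measurableSet_lt h1 h2).inter (measurableSet_le h2 measurable_const))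

/-! ### Counting -/

/-- A bounded set contains only finitely many lattice points. -/
lemma finite_lattice {Q : Set V} (hQ : Bornology.IsBounded Q) : (Q ∩ latticePts).Finite := by
  obtain ⟨R, hR⟩ := hQ.subset_closedBall 0
  have hfin : ((Icc (-⌈R⌉) ⌈R⌉ : Set ℤ) ×ˢ (Icc (-⌈R⌉) ⌈R⌉ : Set ℤ)).Finite :=
    (finite_Icc _ _).prod (finite_Icc _ _)
  refine (hfin.image fun q : ℤ × ℤ => (((q.1 : ℝ), (q.2 : ℝ)) : V)).subset ?_
  rintro x ⟨hx, ⟨⟨a, b⟩, rfl⟩⟩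
  refine ⟨(a, b), ?_, rfl⟩
  have h := hR hx
  rw [mem_closedBall_zero_iff, Prod.norm_def, max_le_iff, Real.norm_eq_abs, Real.norm_eq_abs,
    abs_le, abs_le] at h
  simp only at h
  have hc := Int.le_ceil R
  have c1 : (-⌈R⌉ : ℝ) ≤ a := by linarith
  have c2 : (a : ℝ) ≤ ⌈R⌉ := by linarith
  have c3 : (-⌈R⌉ : ℝ) ≤ b := by linarith
  have c4 : (b : ℝ) ≤ ⌈R⌉ := by linarith
  exact ⟨⟨by exact_mod_cast c1, by exact_mod_cast c2⟩, ⟨by exact_mod_cast c3, by exact_mod_cast c4⟩⟩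

/-- **Area–boundary relation for ℓ-reflexive polygons.** -/
theorem area_boundary_relation (ℓ : ℕ) (hℓ : 0 < ℓ) (Q : Set V) (hQ : IsLReflexive ℓ Q) :
    (ℓ : ℝ) * (frontier Q ∩ latticePts).ncard = 2 * (MeasureTheory.volume Q).toReal := by
  have hℓR : (0 : ℝ) < ℓ := by exact_mod_cast hℓ
  -- `Q` is the convex hull of its vertices, a finite set of lattice points
  obtain ⟨E, hE, hEl⟩ : ∃ E : Finset V, Q = convexHull ℝ (E : Set V) ∧
      ∀ a ∈ E, a ∈ latticePts := by
    obtain ⟨A, hA, -⟩ := hQ.polygon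
    have hcomp : IsCompact Q := hA ▸ A.finite_toSet.isCompact_convexHull ℝ
    have hconv : Convex ℝ Q := hA ▸ convex_convexHull ℝ _
    have hfin : (Q.extremePoints ℝ).Finite :=
      A.finite_toSet.subset (hA ▸ extremePoints_convexHull_subset)
    refine ⟨hfin.toFinset, ?_, fun a ha => (hQ.vertices_primitive a (by simpa using ha)).1⟩
    rw [hfin.coe_toFinset, ← (hfin.isClosed_convexHull ℝ).closure_eq,
      closure_convexHull_extremePoints hcomp hconv]
  have hconv : Convex ℝ Q := hE ▸ convex_convexHull ℝ _
  have hcomp : IsCompact Q := hE ▸ E.finite_toSet.isCompact_convexHull ℝ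
  have hfin : (frontier Q ∩ latticePts).Finite := (finite_lattice hcomp.isBounded).subset
    (inter_subset_inter_left _ hcomp.isClosed.frontier_subset)
  have hstep : ∀ p : V, ∃ m n : ℤ, p ∈ frontier Q ∩ latticePts → IsStep ℓ Q p m n := by
    intro p
    by_cases hp : p ∈ frontier Q ∩ latticePts
    · obtain ⟨m, n, h⟩ := exists_step hℓ hQ hE hEl hp
      exact ⟨m, n, fun _ => h⟩
    · exact ⟨0, 0, fun h => absurd h hp⟩
  choose m n hmn using hstep
  have hunion : Q \ {0} = ⋃ p ∈ hfin.toFinset, tri ℓ p (m p) (n p) := by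
    apply subset_antisymm
    · rintro y ⟨hy, hy0⟩
      obtain ⟨p, hp, m', n', h, hyt⟩ := exists_mem_tri hℓ hQ hE hEl hy hy0
      obtain ⟨rfl, rfl⟩ := (hmn p hp).unique hℓ h
      exact mem_biUnion (by simpa using hp) hyt
    · refine iUnion₂_subset fun p hp => ?_
      exact tri_subset hℓ hconv (interior_subset hQ.zero_mem_interior)
        (hmn p (hfin.mem_toFinset.1 hp))
  have hdisj : PairwiseDisjoint (hfin.toFinset : Set V) fun p => tri ℓ p (m p) (n p) := by
    intro p hp q hq hpq
    rw [hfin.coe_toFinset] at hp hq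
    exact Set.disjoint_left.2 fun y hy hy' =>
      hpq (tri_disjoint hℓ hp.2 hq.2 (hmn p hp) (hmn q hq) hy hy')
  have hvol : MeasureTheory.volume Q =
      (frontier Q ∩ latticePts).ncard * ENNReal.ofReal (ℓ / 2) := by
    rw [← MeasureTheory.measure_sdiff_null (s := Q) (t := {0}) (MeasureTheory.measure_singleton _),
      hunion, MeasureTheory.measure_biUnion_finset hdisj fun p _ => measurableSet_tri _ _ _ _,
      Finset.sum_congr rfl fun p hp => volume_tri hℓ (hmn p (hfin.mem_toFinset.1 hp)).eq,
      Finset.sum_const, nsmul_eq_mul, Set.ncard_eq_toFinset_card _ hfin]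
  rw [hvol, ENNReal.toReal_mul, ENNReal.toReal_natCast, ENNReal.toReal_ofReal (by positivity)]
  ring
end
end

section
/- Let ℓ be a positive integer and Q ⊆ ℝ² an ℓ-reflexive polygon with respect to ℤ². If the number #(frontier Q ∩ ℤ²) of lattice points on the boundary of Q is odd, then ℓ is odd. -/
/-!
Suppose `ℓ` is even. Walk once counterclockwise along the boundary of `Q`, from each lattice point
to the next one. If the edge used at the step from `x` to `y` lies on `⟨η, ·⟩ = -ℓ` with `η = (a, b)`
primitive, then `y = x + (b, -a)`. Modulo 2 the equation `⟨η, x⟩ = -ℓ` reads `⟨η, x⟩ = 0`, and since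
`η` is nonzero modulo 2 its kernel there is `{0, (b, -a)}`; hence the step exchanges the points that
are divisible by 2 with those that are not (`even_step_iff`). So there are equally many
boundary lattice points of both kinds, and their number is even.

The step is constructed in `exists_next`. A supporting functional at `x` is tilted, keeping
its value at `x`, until it first touches another vertex `w` (`exists_edge_vertex`); this gives the
edge leaving `x` counterclockwise, and `x + (b, -a)` lies on the segment from `x` to `w` because
`w - x` is a positive integer multiple of `(b, -a)`. Injectivity of the step (`next_inj`) suffices
for the count: it gives both inequalities between the numbers of points of the two kinds. Of the
primitivity of the vertices only the fact that they are lattice points enters.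
-/

open Set

noncomputable section

lemma exists_pos_add_smul_mem {Q : Set V} {z : V} (hz : z ∈ interior Q) (d : V) :
    ∃ ε : ℝ, 0 < ε ∧ z + ε • d ∈ Q := by
  have hc : Filter.Tendsto (fun t : ℝ => z + t • d) (nhdsWithin 0 (Ioi 0)) (nhds z) := by
    have : Continuous (fun t : ℝ => z + t • d) := by fun_prop
    have h := this.tendsto 0
    simp only [zero_smul, add_zero] at h
    exact h.mono_left nhdsWithin_le_nhds
  have h1 := hc.eventually (mem_interior_iff_mem_nhds.1 hz)
  obtain ⟨t, ht, ht'⟩ := (h1.and self_mem_nhdsWithin).exists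
  exact ⟨t, ht', ht⟩

/-- A polygon is compact and is the convex hull of its finitely many vertices. -/
lemma polygon_vertices {Q : Set V} (hQ : IsPolygon Q) :
    IsCompact Q ∧ (extremePoints ℝ Q).Finite ∧ convexHull ℝ (extremePoints ℝ Q) = Q := by
  obtain ⟨A, rfl, -⟩ := hQ
  have hc : IsCompact (convexHull ℝ (A : Set V)) := A.finite_toSet.isCompact_convexHull ℝ
  have hf : (extremePoints ℝ (convexHull ℝ (A : Set V))).Finite :=
    A.finite_toSet.subset extremePoints_convexHull_subset
  refine ⟨hc, hf, ?_⟩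
  rw [← (hf.isClosed_convexHull ℝ).closure_eq]
  exact closure_convexHull_extremePoints hc (convex_convexHull ℝ _)

lemma le_dotV_of_vertices {Q : Set V} (hQ : IsPolygon Q) (f : V) (c : ℝ)
    (h : ∀ z ∈ extremePoints ℝ Q, c ≤ dotV f z) : ∀ z ∈ Q, c ≤ dotV f z := by
  have hconv : Convex ℝ {z : V | c ≤ dotV f z} := by
    refine convex_halfSpace_ge (f := fun z : V => dotV f z) ⟨?_, ?_⟩ c
    · intro x y; simp only [dotV, Prod.fst_add, Prod.snd_add]; ring
    · intro k y; simp only [dotV, Prod.smul_fst, Prod.smul_snd, smul_eq_mul]; ring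
  have := convexHull_min (s := extremePoints ℝ Q) h hconv
  rw [(polygon_vertices hQ).2.2] at this
  exact this

/-- A supporting functional at a point outside the interior, normalised to have minimum at least
`-1` on `Q`; for `x ∈ Q` the two inequalities give the value `-1` at `x`. -/
lemma exists_support {Q : Set V} (hQ : IsPolygon Q) (h0 : (0 : V) ∈ interior Q) {x : V}
    (hx : x ∉ interior Q) : ∃ f : V, (∀ z ∈ Q, -1 ≤ dotV f z) ∧ dotV f x ≤ -1 := by
  have hconv : Convex ℝ Q := by
    obtain ⟨A, rfl, -⟩ := hQ; exact convex_convexHull ℝ _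
  obtain ⟨g, hg⟩ := geometric_hahn_banach_open_point hconv.interior isOpen_interior hx
  have hgx : 0 < g x := by simpa using hg 0 h0
  have hle : ∀ z ∈ Q, g z ≤ g x := by
    have h1 : closure (interior Q) ⊆ {z | g z ≤ g x} :=
      closure_minimal (fun z hz => (hg z hz).le) (isClosed_le g.continuous continuous_const)
    rw [hconv.closure_interior_eq_closure_of_nonempty_interior ⟨0, h0⟩] at h1
    exact fun z hz => h1 (subset_closure hz)
  have hrep : ∀ z : V, g z = z.1 * g (1, 0) + z.2 * g (0, 1) := by
    intro z
    have hz : z = z.1 • ((1, 0) : V) + z.2 • ((0, 1) : V) := by ext <;> simp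
    conv_lhs => rw [hz]
    simp only [map_add, map_smul, smul_eq_mul]
  have hf : ∀ z : V, dotV (-(g (1, 0)) / g x, -(g (0, 1)) / g x) z = -(g z / g x) := by
    intro z; rw [hrep z]; simp only [dotV]; ring
  refine ⟨(-(g (1, 0)) / g x, -(g (0, 1)) / g x), fun z hz => ?_, ?_⟩
  · rw [hf]
    have := (div_le_one hgx).2 (hle z hz)
    linarith
  · rw [hf, div_self hgx.ne']

/-- The edge leaving the boundary point `x` counterclockwise: its supporting functional `f` and
a vertex `w` on it beyond `x`. -/
lemma exists_edge_vertex {Q : Set V} (hQ : IsPolygon Q) (h0 : (0 : V) ∈ interior Q) {x : V}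
    (hxQ : x ∈ Q) (hx : x ∉ interior Q) :
    ∃ f : V, ∃ w ∈ extremePoints ℝ Q, (∀ z ∈ Q, -1 ≤ dotV f z) ∧ dotV f x = -1 ∧
      dotV f w = -1 ∧ 0 < x.1 * w.2 - x.2 * w.1 := by
  obtain ⟨f₀, hf₀, hf₀x⟩ := exists_support hQ h0 hx
  obtain ⟨-, hfin, -⟩ := polygon_vertices hQ
  set E := {z ∈ extremePoints ℝ Q | 0 < x.1 * z.2 - x.2 * z.1} with hE
  have hEfin : E.Finite := hfin.subset fun z hz => hz.1
  have hEne : E.Nonempty := by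
    by_contra hne
    rw [not_nonempty_iff_eq_empty] at hne
    -- otherwise `Q` lies in a closed half-plane with `0` on its boundary line
    have h1 : ∀ z ∈ Q, 0 ≤ dotV (x.2, -x.1) z := by
      refine le_dotV_of_vertices hQ _ _ fun z hz => ?_
      by_contra hlt
      have : z ∈ E := ⟨hz, by simp only [dotV] at hlt; linarith⟩
      simp [hne] at this
    obtain ⟨ε, hε, hm⟩ := exists_pos_add_smul_mem h0 (-x.2, x.1)
    have h2 := h1 _ hm
    simp only [dotV, zero_add, Prod.smul_mk, smul_eq_mul] at h2
    have h3 : ε * (x.1 * x.1 + x.2 * x.2) ≤ 0 := by linarith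
    have h4 : x.1 * x.1 + x.2 * x.2 ≤ 0 := nonpos_of_mul_nonpos_right h3 hε
    have h5 : x.1 = 0 := by nlinarith [mul_self_nonneg x.1, mul_self_nonneg x.2]
    have h6 : x.2 = 0 := by nlinarith [mul_self_nonneg x.1, mul_self_nonneg x.2]
    exact hx ((Prod.ext h5 h6 : x = 0) ▸ h0)
  -- the functionals with value `-1` at `x` are `f₀ - t • (-x.2, x.1)`; take the largest admissible `t`
  obtain ⟨w, hw, hmin⟩ := hEfin.exists_minimalFor
    (fun z : V => (dotV f₀ z + 1) / (x.1 * z.2 - x.2 * z.1)) E hEne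
  set t := (dotV f₀ w + 1) / (x.1 * w.2 - x.2 * w.1) with ht
  have hmin' : ∀ z ∈ E, t ≤ (dotV f₀ z + 1) / (x.1 * z.2 - x.2 * z.1) := fun z hz => by
    rcases le_total t ((dotV f₀ z + 1) / (x.1 * z.2 - x.2 * z.1)) with h | h
    · exact h
    · exact hmin hz h
  have hwc := hw.2
  have ht0 : 0 ≤ t := div_nonneg (by linarith [hf₀ w hw.1.1]) hwc.le
  have hval : ∀ z : V, dotV (f₀.1 + t * x.2, f₀.2 - t * x.1) z
      = dotV f₀ z - t * (x.1 * z.2 - x.2 * z.1) := by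
    intro z; simp only [dotV]; ring
  refine ⟨(f₀.1 + t * x.2, f₀.2 - t * x.1), w, hw.1, le_dotV_of_vertices hQ _ _ ?_, ?_, ?_, hwc⟩
  · intro z hz
    rw [hval]
    by_cases hzc : 0 < x.1 * z.2 - x.2 * z.1
    · have := (le_div_iff₀ hzc).1 (hmin' z ⟨hz, hzc⟩)
      linarith
    · have := mul_nonneg ht0 (sub_nonneg.2 (not_lt.1 hzc))
      have := hf₀ z hz.1
      nlinarith
  · rw [hval]
    have := hf₀ x hxQ
    have : t * (x.1 * x.2 - x.2 * x.1) = 0 := by ring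
    linarith
  · rw [hval, ht, div_mul_cancel₀ _ hwc.ne']
    ring

lemma isCoprime_of_isPrimitive_s5 {a b : ℤ} (h : IsPrimitive ((a : ℝ), (b : ℝ))) :
    IsCoprime a b := by
  obtain ⟨-, hne, hseg⟩ := h
  rw [Int.isCoprime_iff_gcd_eq_one]
  have hab : a ≠ 0 ∨ b ≠ 0 := by
    by_contra! hc
    exact hne (by simp [hc.1, hc.2])
  have hg : 0 < Int.gcd a b := Int.gcd_pos_iff.2 hab
  obtain ⟨a', ha⟩ := Int.gcd_dvd_left (a := a) (b := b)
  obtain ⟨b', hb⟩ := Int.gcd_dvd_right (a := a) (b := b)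
  set g := Int.gcd a b with hgdef
  have hgR : (0 : ℝ) < g := by exact_mod_cast hg
  have haR : (a : ℝ) = g * a' := by exact_mod_cast ha
  have hbR : (b : ℝ) = g * b' := by exact_mod_cast hb
  have hmem : ((a' : ℝ), (b' : ℝ)) ∈ segment ℝ (0 : V) ((a : ℝ), (b : ℝ)) ∩ latticePts := by
    refine ⟨?_, (a', b'), rfl⟩
    rw [segment_eq_image]
    refine ⟨1 / g, ⟨by positivity, ?_⟩, ?_⟩
    · rw [div_le_one hgR]; exact_mod_cast hg
    · ext
      · simp [haR]; field_simp
      · simp [hbR]; field_simp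
  rw [hseg] at hmem
  rcases hmem with h | h
  · exfalso
    have h1 : (a' : ℝ) = 0 := congrArg Prod.fst h
    have h2 : (b' : ℝ) = 0 := congrArg Prod.snd h
    exact hne (by rw [haR, hbR, h1, h2]; simp)
  · have h1 : (a' : ℝ) = a := congrArg Prod.fst h
    have h2 : (b' : ℝ) = b := congrArg Prod.snd h
    have h1' : a' = a := by exact_mod_cast h1
    have h2' : b' = b := by exact_mod_cast h2
    rw [h1'] at ha
    rw [h2'] at hb
    have : (g : ℤ) = 1 := by
      rcases hab with h | h
      · exact mul_right_cancel₀ h (by rw [← ha, one_mul])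
      · exact mul_right_cancel₀ h (by rw [← hb, one_mul])
    exact_mod_cast this

/-- `(p + b, q - a)` is the next boundary lattice point after `(p, q)` counterclockwise, where
`(a, b)` is the primitive inner normal of the edge between them. -/
lemma exists_next {ℓ : ℕ} (hℓ : 0 < ℓ) {Q : Set V} (hQ : IsLReflexive ℓ Q) {p q : ℤ}
    (hx : ((p : ℝ), (q : ℝ)) ∈ frontier Q) :
    ∃ a b : ℤ, IsCoprime a b ∧ a * p + b * q = -(ℓ : ℤ) ∧
      (∀ z ∈ Q, -(ℓ : ℝ) ≤ a * z.1 + b * z.2) ∧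
      ((p : ℝ) + b, (q : ℝ) - a) ∈ frontier Q := by
  have hpol := hQ.polygon
  have hcl : IsClosed Q := (polygon_vertices hpol).1.isClosed
  have hconv : Convex ℝ Q := by
    obtain ⟨A, rfl, -⟩ := hpol; exact convex_convexHull ℝ _
  rw [hcl.frontier_eq] at hx ⊢
  obtain ⟨f, w, hw, hfQ, hfx, hfw, hcr⟩ := exists_edge_vertex hpol hQ.zero_mem_interior hx.1 hx.2
  obtain ⟨⟨⟨c, d⟩, rfl⟩, -⟩ := hQ.vertices_primitive w hw
  have hf0 : f ≠ 0 := by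
    rintro rfl
    simp [dotV] at hfx
  obtain ⟨η, hη, hηF⟩ := hQ.edge_cond {y ∈ Q | ∀ z ∈ Q, dotV f y ≤ dotV f z}
    ⟨⟨f, hf0, rfl⟩, _, ⟨hx.1, fun z hz => hfx ▸ hfQ z hz⟩, _,
      ⟨hw.1, fun z hz => hfw ▸ hfQ z hz⟩, fun h => by
        rw [Prod.mk.injEq] at h
        simp only [h.1, h.2] at hcr
        linarith [mul_comm (c : ℝ) d]⟩
  have hηx : dotV η ((p : ℝ), (q : ℝ)) = -(ℓ : ℝ) :=
    hηF ⟨hx.1, fun z hz => hfx ▸ hfQ z hz⟩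
  have hηw : dotV η ((c : ℝ), (d : ℝ)) = -(ℓ : ℝ) :=
    hηF ⟨hw.1, fun z hz => hfw ▸ hfQ z hz⟩
  obtain ⟨⟨a, b⟩, rfl⟩ := hη.1
  have hco := isCoprime_of_isPrimitive_s5 hη
  simp only [dotV] at hfx hfw hηx hηw hcr hfQ
  have hℓR : (0 : ℝ) < ℓ := by exact_mod_cast hℓ
  -- `(p, q)` and `(c, d)` are linearly independent, so `(a, b) = ℓ • f`
  have ha : (a : ℝ) = ℓ * f.1 := by
    refine mul_right_cancel₀ hcr.ne' ?_
    linear_combination d * hηx - q * hηw - ℓ * d * hfx + ℓ * q * hfw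
  have hb : (b : ℝ) = ℓ * f.2 := by
    refine mul_right_cancel₀ hcr.ne' ?_
    linear_combination p * hηw - c * hηx - ℓ * p * hfw + ℓ * c * hfx
  have hsup : ∀ z ∈ Q, -(ℓ : ℝ) ≤ a * z.1 + b * z.2 := by
    intro z hz
    rw [ha, hb]
    have := mul_le_mul_of_nonneg_left (hfQ z hz) hℓR.le
    linarith
  have hx' : a * p + b * q = -(ℓ : ℤ) := by exact_mod_cast hηx
  have hw' : a * c + b * d = -(ℓ : ℤ) := by exact_mod_cast hηw
  -- `(c - p, d - q)` is orthogonal to the primitive vector `(a, b)`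
  obtain ⟨k, hk1, hk2⟩ : ∃ k : ℤ, c - p = k * b ∧ d - q = -(k * a) := by
    obtain ⟨u, v, huv⟩ := hco
    refine ⟨v * (c - p) - u * (d - q), ?_, ?_⟩
    · linear_combination (-(c - p)) * huv + u * (hw' - hx')
    · linear_combination (-(d - q)) * huv + v * (hw' - hx')
  have hkpos : 0 < k := by
    have h1 : (0 : ℤ) < p * d - q * c := by exact_mod_cast hcr
    have h2 : p * d - q * c = k * ℓ := by
      linear_combination p * hk2 - q * hk1 - k * hx'
    rw [h2] at h1
    exact pos_of_mul_pos_left h1 (by positivity)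
  have hkR : (1 : ℝ) ≤ k := by exact_mod_cast hkpos
  have hk1R : (c : ℝ) = p + k * b := by
    have : c = p + k * b := by linarith
    exact_mod_cast this
  have hk2R : (d : ℝ) = q - k * a := by
    have : d = q - k * a := by linarith
    exact_mod_cast this
  refine ⟨a, b, hco, hx', hsup, ?_, ?_⟩
  · refine hconv.segment_subset hx.1 hw.1 ?_
    rw [segment_eq_image]
    have hk0 : (k : ℝ) ≠ 0 := by positivity
    refine ⟨1 / k, ⟨by positivity, (div_le_one (by positivity)).2 hkR⟩, ?_⟩
    ext
    · simp [hk1R]; field_simp; ring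
    · simp [hk2R]; field_simp; ring
  · intro hint
    obtain ⟨ε, hε, hm⟩ := exists_pos_add_smul_mem hint (-(a : ℝ), -(b : ℝ))
    have h1 := hsup _ hm
    simp only [Prod.smul_mk, smul_eq_mul, Prod.mk_add_mk] at h1
    have h2 : ε * ((a : ℝ) * a + b * b) ≤ 0 := by linarith
    have h3 : (a : ℝ) * a + b * b ≤ 0 := nonpos_of_mul_nonpos_right h2 hε
    have h4 : (a : ℝ) = 0 := by nlinarith [mul_self_nonneg (a : ℝ), mul_self_nonneg (b : ℝ)]
    have h5 : (b : ℝ) = 0 := by nlinarith [mul_self_nonneg (a : ℝ), mul_self_nonneg (b : ℝ)]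
    rw [h4, h5] at hηx
    linarith

/-- At most one edge ends, counterclockwise, at a given boundary point. -/
lemma next_inj {ℓ : ℕ} (hℓ : 0 < ℓ) {p q a b p' q' a' b' : ℤ}
    (h : a * p + b * q = -(ℓ : ℤ)) (h' : a' * p' + b' * q' = -(ℓ : ℤ))
    (hs : -(ℓ : ℤ) ≤ a * p' + b * q') (hs' : -(ℓ : ℤ) ≤ a' * p + b' * q)
    (e₁ : p + b = p' + b') (e₂ : q - a = q' - a') : p = p' ∧ q = q' := by
  have hp : p = p' + b' - b := by linarith
  have hq : q = q' - a' + a := by linarith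
  have hℓ' : (ℓ : ℤ) ≠ 0 := by positivity
  subst hp hq
  have hcross : a * b' = a' * b := by
    apply le_antisymm <;> linarith
  have ha : a = a' := by
    refine mul_right_cancel₀ hℓ' ?_
    linear_combination a * h' - a' * h - (q' - a') * hcross
  have hb : b = b' := by
    refine mul_right_cancel₀ hℓ' ?_
    linear_combination b * h' - b' * h + (p' + b') * hcross
  constructor <;> linarith

lemma even_step_iff {ℓ : ℕ} (hℓ : Even ℓ) {p q a b : ℤ} (hco : IsCoprime a b)
    (h : a * p + b * q = -(ℓ : ℤ)) :
    (Even (p + b) ∧ Even (q - a)) ↔ ¬ (Even p ∧ Even q) := by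
  have h1 : Even (a * p + b * q) := by
    rw [h]; exact (by exact_mod_cast hℓ : Even (ℓ : ℤ)).neg
  have h2 : ¬ (Even a ∧ Even b) := by
    rintro ⟨ha, hb⟩
    have := hco.isUnit_of_dvd' ha.two_dvd hb.two_dvd
    exact absurd this (by decide)
  simp only [Int.even_add, Int.even_sub, Int.even_mul] at h1 ⊢
  tauto

/-- If the number of boundary lattice points of an ℓ-reflexive polygon is odd,
then ℓ is odd. -/
theorem odd_boundary_implies_odd_index (ℓ : ℕ) (hℓ : 0 < ℓ) (Q : Set V)
    (hQ : IsLReflexive ℓ Q) (hodd : Odd ((frontier Q ∩ latticePts).ncard)) :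
    Odd ℓ := by
  classical
  by_contra hev
  rw [Nat.not_odd_iff_even] at hev
  have hfin : (frontier Q ∩ latticePts).Finite := Set.finite_of_ncard_pos hodd.pos
  let c : ℤ × ℤ → V := fun p => ((p.1 : ℝ), (p.2 : ℝ))
  have hcinj : Function.Injective c := by
    intro x y hxy
    simp only [c, Prod.mk.injEq, Int.cast_inj] at hxy
    exact Prod.ext hxy.1 hxy.2
  have himg : frontier Q ∩ latticePts = c '' (c ⁻¹' frontier Q) := by
    ext x
    constructor
    · rintro ⟨hx, r, rfl⟩; exact ⟨r, hx, rfl⟩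
    · rintro ⟨r, hr, rfl⟩; exact ⟨hr, r, rfl⟩
  rw [himg, Set.ncard_image_of_injective _ hcinj] at hodd
  rw [himg] at hfin
  have hBfin : (c ⁻¹' frontier Q).Finite := hfin.of_finite_image hcinj.injOn
  obtain ⟨B, hB⟩ := hBfin.exists_finset_coe
  rw [← hB, Set.ncard_coe_finset] at hodd
  have hmem : ∀ r, r ∈ B ↔ c r ∈ frontier Q := fun r => by
    rw [← Finset.mem_coe, hB]; rfl
  have hsub : frontier Q ⊆ Q := (polygon_vertices hQ.polygon).1.isClosed.frontier_subset
  have hex : ∀ r : ℤ × ℤ, ∃ η : ℤ × ℤ, r ∈ B → IsCoprime η.1 η.2 ∧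
      η.1 * r.1 + η.2 * r.2 = -(ℓ : ℤ) ∧
      (∀ s ∈ B, -(ℓ : ℤ) ≤ η.1 * s.1 + η.2 * s.2) ∧ (r.1 + η.2, r.2 - η.1) ∈ B := by
    intro r
    by_cases hr : r ∈ B
    · obtain ⟨a, b, h1, h2, h3, h4⟩ := exists_next hℓ hQ ((hmem r).1 hr)
      refine ⟨(a, b), fun _ => ⟨h1, h2, fun s hs => ?_, ?_⟩⟩
      · have := h3 _ (hsub ((hmem s).1 hs))
        simp only [c] at this
        exact_mod_cast this
      · rw [hmem]; simpa [c] using h4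
    · exact ⟨0, fun h => absurd h hr⟩
  choose η hη using hex
  let s : ℤ × ℤ → ℤ × ℤ := fun r => (r.1 + (η r).2, r.2 - (η r).1)
  have hsB : ∀ r ∈ B, s r ∈ B := fun r hr => (hη r hr).2.2.2
  have hsinj : Set.InjOn s B := by
    intro r hr r' hr' h
    simp only [s, Prod.mk.injEq] at h
    obtain ⟨-, h1, h2, -⟩ := hη r hr
    obtain ⟨-, h1', h2', -⟩ := hη r' hr'
    have := next_inj hℓ h1 h1' (h2 r' hr') (h2' r hr) h.1 h.2
    exact Prod.ext this.1 this.2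
  have hpar : ∀ r ∈ B, ((Even (s r).1 ∧ Even (s r).2) ↔ ¬ (Even r.1 ∧ Even r.2)) :=
    fun r hr => even_step_iff hev (hη r hr).1 (hη r hr).2.1
  let P : ℤ × ℤ → Prop := fun r => Even r.1 ∧ Even r.2
  have hle1 : (B.filter P).card ≤ (B.filter (fun r => ¬ P r)).card := by
    refine Finset.card_le_card_of_injOn s (fun r hr => ?_) (hsinj.mono fun r hr => ?_)
    · simp only [Finset.coe_filter, Set.mem_ofPred_eq] at hr ⊢
      exact ⟨hsB r hr.1, fun h => (hpar r hr.1).1 h hr.2⟩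
    · exact (Finset.mem_filter.1 hr).1
  have hle2 : (B.filter (fun r => ¬ P r)).card ≤ (B.filter P).card := by
    refine Finset.card_le_card_of_injOn s (fun r hr => ?_) (hsinj.mono fun r hr => ?_)
    · simp only [Finset.coe_filter, Set.mem_ofPred_eq] at hr ⊢
      exact ⟨hsB r hr.1, (hpar r hr.1).2 hr.2⟩
    · exact (Finset.mem_filter.1 hr).1
  have hsum := Finset.card_filter_add_card_filter_not (s := B) P
  obtain ⟨m, hm⟩ := hodd
  omega
end
end

section
/- Duality of ℓ-reflexive polygons: Let ℓ be a positive integer and Q ⊆ ℝ² an ℓ-reflexive polygon with respect to ℤ². Then the dual Q* := ℓ·Q° is again an ℓ-reflexive polygon with respect to ℤ²: all vertices of Q* lie in ℤ² and are primitive, 0 lies in the interior of Q*, and every edge of Q* is contained in a line {x ∈ ℝ² : ⟨x,η⟩ = −ℓ} for some primitive η ∈ ℤ². -/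
/-!
Write `D = {x | ∀ y ∈ Q, ⟨x, y⟩ ≥ -ℓ}` for the dual polygon, where `Q` is the convex hull of the
finite set `A`. By Hahn–Banach, `Q` is conversely the set of all `y` with `⟨x, y⟩ ≥ -ℓ` on `D`
(`mem_of_forall_dual`). Two points that pair to `-ℓ ≠ 0` with a common vector are linearly
independent as soon as they are distinct, and a vector is determined by its pairings with two
linearly independent ones. This gives both halves of the duality.

* Vertices of `D`: at an extreme point `x` of `D` the tight constraints `⟨x, a⟩ = -ℓ`, `a ∈ A`,
  span `ℝ²`, since otherwise `x` could be moved both ways along a line inside `D`. Hence `x` cuts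
  out an edge of `Q`, and `x` must be the primitive normal which the hypothesis attaches to that
  edge. In particular the extreme points are lattice points of the bounded set `D`, so they are
  finitely many, and `D` is their convex hull by Krein–Milman.
* Edges of `D`: after rescaling, an edge is cut out by some `y` with minimum `-ℓ` on `D`, so
  `y ∈ Q`. If `y` lies strictly between `a, b ∈ Q`, then `a` and `b` also attain `-ℓ` along the
  edge, which contains two independent points, so `a = b = y`. Thus `y` is a vertex of `Q`, hence
  primitive.
-/

open Set

noncomputable section

lemma dotV_comm (x y : V) : dotV x y = dotV y x := by
  simp only [dotV]; ring

lemma dotV_smul_left (c : ℝ) (x y : V) : dotV (c • x) y = c * dotV x y := by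
  simp only [dotV, Prod.smul_fst, Prod.smul_snd, smul_eq_mul]; ring

lemma dotV_add_left (x y z : V) : dotV (x + y) z = dotV x z + dotV y z := by
  simp only [dotV, Prod.fst_add, Prod.snd_add]; ring

lemma dotV_smul_right (c : ℝ) (x y : V) : dotV x (c • y) = c * dotV x y := by
  rw [dotV_comm, dotV_smul_left, dotV_comm]

lemma dotV_add_right (x y z : V) : dotV x (y + z) = dotV x y + dotV x z := by
  rw [dotV_comm, dotV_add_left, dotV_comm y, dotV_comm z]

lemma continuous_dotV_left (y : V) : Continuous fun x : V => dotV x y := by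
  unfold dotV; fun_prop

lemma eq_of_dotV_eq {u v x y : V} (hdet : u.1 * v.2 - u.2 * v.1 ≠ 0)
    (hu : dotV x u = dotV y u) (hv : dotV x v = dotV y v) : x = y := by
  simp only [dotV] at hu hv
  ext
  · apply mul_right_cancel₀ hdet
    linear_combination v.2 * hu - u.2 * hv
  · apply mul_right_cancel₀ hdet
    linear_combination u.1 * hv - v.1 * hu

/-- Distinct points on a line that avoids the origin are linearly independent. -/
lemma det_ne_zero_of_ne {c : ℝ} (hc : c ≠ 0) {y u v : V} (hu : dotV y u = c)
    (hv : dotV y v = c) (huv : u ≠ v) : u.1 * v.2 - u.2 * v.1 ≠ 0 := by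
  intro h
  simp only [dotV] at hu hv
  apply huv
  ext
  · apply mul_left_cancel₀ hc
    linear_combination v.1 * hu - u.1 * hv + y.2 * h
  · apply mul_left_cancel₀ hc
    linear_combination v.2 * hu - u.2 * hv - y.1 * h

lemma mem_dualPolygon_iff {ℓ : ℕ} (hℓ : 0 < ℓ) {Q : Set V} {x : V} :
    x ∈ dualPolygon ℓ Q ↔ ∀ y ∈ Q, -(ℓ : ℝ) ≤ dotV x y := by
  have hl : (0 : ℝ) < ℓ := by exact_mod_cast hℓ
  constructor
  · rintro ⟨w, hw, rfl⟩ y hy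
    have := hw y hy
    simp only [dotV_smul_left]
    nlinarith
  · intro h
    refine ⟨(ℓ : ℝ)⁻¹ • x, fun y hy => ?_, ?_⟩
    · rw [dotV_smul_left, inv_mul_eq_div, le_div_iff₀ hl]
      linarith [h y hy]
    · simp only [smul_smul, mul_inv_cancel₀ hl.ne', one_smul]

lemma mem_dualPolygon_convexHull_iff {ℓ : ℕ} (hℓ : 0 < ℓ) {A : Set V} {x : V} :
    x ∈ dualPolygon ℓ (convexHull ℝ A) ↔ ∀ a ∈ A, -(ℓ : ℝ) ≤ dotV x a := by
  rw [mem_dualPolygon_iff hℓ]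
  refine ⟨fun h a ha => h a (subset_convexHull ℝ A ha), fun h => ?_⟩
  have hconv : Convex ℝ {y : V | -(ℓ : ℝ) ≤ dotV x y} := by
    intro a ha b hb s t hs ht hst
    simp only [mem_ofPred_eq, dotV_add_right, dotV_smul_right] at *
    nlinarith [mul_le_mul_of_nonneg_left ha hs, mul_le_mul_of_nonneg_left hb ht]
  exact fun y hy => convexHull_min (fun a ha => h a ha) hconv hy

lemma exists_dotV_eq (f : V →L[ℝ] ℝ) : ∃ w : V, ∀ y, f y = dotV w y := by
  refine ⟨(f (1, 0), f (0, 1)), fun y => ?_⟩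
  have h : y = y.1 • ((1, 0) : V) + y.2 • ((0, 1) : V) := by ext <;> simp
  conv_lhs => rw [h]
  simp only [map_add, map_smul, smul_eq_mul, dotV]
  ring

/-- The bipolar theorem for `dualPolygon`. -/
lemma mem_of_forall_dual {ℓ : ℕ} (hℓ : 0 < ℓ) {Q : Set V} (hconv : Convex ℝ Q)
    (hcl : IsClosed Q) (h0 : (0 : V) ∈ Q) {y : V}
    (h : ∀ x ∈ dualPolygon ℓ Q, -(ℓ : ℝ) ≤ dotV x y) : y ∈ Q := by
  have hl : (0 : ℝ) < ℓ := by exact_mod_cast hℓ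
  by_contra hy
  obtain ⟨f, u, hfy, hfQ⟩ := geometric_hahn_banach_point_closed hconv hcl hy
  obtain ⟨w, hw⟩ := exists_dotV_eq f
  have hu : u < 0 := by simpa using hfQ 0 h0
  have hc : 0 < (ℓ : ℝ) / (-u) := div_pos hl (neg_pos.2 hu)
  -- The separating functional, rescaled so that the separating level `u` becomes `-ℓ`.
  have hcu : (ℓ : ℝ) / (-u) * u = -ℓ := by
    rw [div_neg, neg_mul, div_mul_cancel₀ _ hu.ne]
  have h1 := h (((ℓ : ℝ) / (-u)) • w) <| (mem_dualPolygon_iff hℓ).2 fun q hq => by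
    rw [dotV_smul_left, ← hw, ← hcu]
    exact mul_le_mul_of_nonneg_left (hfQ q hq).le hc.le
  rw [dotV_smul_left, ← hw, ← hcu] at h1
  exact absurd (le_of_mul_le_mul_left h1 hc) (not_le.2 hfy)

lemma isCompact_dualPolygon {ℓ : ℕ} (hℓ : 0 < ℓ) {Q : Set V} (h0 : (0 : V) ∈ interior Q) :
    IsCompact (dualPolygon ℓ Q) := by
  have hcl : IsClosed (dualPolygon ℓ Q) := by
    have : dualPolygon ℓ Q = ⋂ y ∈ Q, {x : V | -(ℓ : ℝ) ≤ dotV x y} := by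
      ext x; simp [mem_dualPolygon_iff hℓ]
    rw [this]
    exact isClosed_biInter fun y _ => isClosed_le continuous_const (continuous_dotV_left y)
  obtain ⟨r, hr, hball⟩ := Metric.mem_nhds_iff.1 (mem_interior_iff_mem_nhds.1 h0)
  have hr2 : 0 < r / 2 := by positivity
  have hmem : ∀ p : V, ‖p‖ ≤ r / 2 → p ∈ Q := fun p hp =>
    hball (mem_ball_zero_iff.2 (by linarith))
  refine Metric.isCompact_of_isClosed_isBounded hcl
    (isBounded_iff_forall_norm_le.2 ⟨ℓ / (r / 2), fun x hx => ?_⟩)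
  rw [mem_dualPolygon_iff hℓ] at hx
  have e1 := hx (r / 2, 0) (hmem _ (by simp [Prod.norm_def, abs_of_pos hr, hr2.le]))
  have e2 := hx (-(r / 2), 0) (hmem _ (by simp [Prod.norm_def, abs_of_pos hr, hr2.le]))
  have e3 := hx (0, r / 2) (hmem _ (by simp [Prod.norm_def, abs_of_pos hr, hr2.le]))
  have e4 := hx (0, -(r / 2)) (hmem _ (by simp [Prod.norm_def, abs_of_pos hr, hr2.le]))
  simp only [dotV, mul_zero, add_zero, zero_add, mul_neg] at e1 e2 e3 e4
  rw [Prod.norm_def, sup_le_iff, Real.norm_eq_abs, Real.norm_eq_abs, le_div_iff₀ hr2,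
    le_div_iff₀ hr2]
  constructor
  · rcases abs_cases x.1 with ⟨h, -⟩ | ⟨h, -⟩ <;> rw [h] <;> linarith
  · rcases abs_cases x.2 with ⟨h, -⟩ | ⟨h, -⟩ <;> rw [h] <;> linarith

lemma convex_dualPolygon {ℓ : ℕ} (hℓ : 0 < ℓ) (Q : Set V) : Convex ℝ (dualPolygon ℓ Q) := by
  intro a ha b hb s t hs ht hst
  rw [mem_dualPolygon_iff hℓ] at *
  intro y hy
  rw [dotV_add_left, dotV_smul_left, dotV_smul_left]
  nlinarith [mul_le_mul_of_nonneg_left (ha y hy) hs, mul_le_mul_of_nonneg_left (hb y hy) ht]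

lemma zero_mem_interior_dualPolygon {ℓ : ℕ} (hℓ : 0 < ℓ) (A : Finset V) :
    (0 : V) ∈ interior (dualPolygon ℓ (convexHull ℝ (A : Set V))) := by
  have hl : (0 : ℝ) < ℓ := by exact_mod_cast hℓ
  rw [mem_interior_iff_mem_nhds]
  have h : ∀ᶠ x in nhds (0 : V), ∀ a ∈ A, -(ℓ : ℝ) < dotV x a :=
    (Filter.eventually_all_finset A).2 fun a _ =>
      (continuous_dotV_left a).continuousAt.eventually_const_lt (by simp [dotV, hl])
  filter_upwards [h] with x hx
  exact (mem_dualPolygon_convexHull_iff hℓ).2 fun a ha => (hx a ha).le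

/-- At an extreme point of the dual polygon, the tight constraints span `ℝ²`. -/
lemma exists_tight_of_mem_extremePoints {ℓ : ℕ} (hℓ : 0 < ℓ) (A : Finset V) {x : V}
    (hx : x ∈ extremePoints ℝ (dualPolygon ℓ (convexHull ℝ (A : Set V)))) :
    ∃ u ∈ A, ∃ v ∈ A, dotV x u = -ℓ ∧ dotV x v = -ℓ ∧ u.1 * v.2 - u.2 * v.1 ≠ 0 := by
  have hl : (0 : ℝ) < ℓ := by exact_mod_cast hℓ
  by_contra! hcon
  -- A direction in which no tight constraint changes.
  obtain ⟨d, hd0, hd⟩ : ∃ d : V, d ≠ 0 ∧ ∀ a ∈ A, dotV x a = -ℓ → dotV d a = 0 := by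
    by_cases hT : ∃ u ∈ A, dotV x u = -ℓ
    · obtain ⟨u, hu, hxu⟩ := hT
      refine ⟨(-u.2, u.1), fun h => ?_, fun a ha hxa => ?_⟩
      · have h1 : u.2 = 0 := by simpa using congrArg Prod.fst h
        have h2 : u.1 = 0 := congrArg Prod.snd h
        simp only [dotV, h1, h2, mul_zero, add_zero] at hxu
        linarith
      · have := hcon u hu a ha hxu hxa
        simp only [dotV]
        linarith
    · push Not at hT
      exact ⟨(1, 0), by simp, fun a ha h => absurd h (hT a ha)⟩
  have hxD := (mem_dualPolygon_convexHull_iff hℓ).1 hx.1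
  have hev : ∀ᶠ t in nhds (0 : ℝ), ∀ a ∈ A, -(ℓ : ℝ) ≤ dotV (x + t • d) a := by
    refine (Filter.eventually_all_finset A).2 fun a ha => ?_
    by_cases hta : dotV x a = -ℓ
    · refine Filter.Eventually.of_forall fun t => ?_
      rw [dotV_add_left, dotV_smul_left, hd a ha hta, hta]
      simp
    · have hlt : -(ℓ : ℝ) < dotV x a := lt_of_le_of_ne (hxD a ha) (Ne.symm hta)
      have hcont : Continuous fun t : ℝ => dotV (x + t • d) a :=
        (continuous_dotV_left a).comp (by fun_prop)
      exact (hcont.continuousAt.eventually_const_lt (by simpa using hlt)).mono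
        fun t ht => ht.le
  obtain ⟨ε, hε, hball⟩ := Metric.eventually_nhds_iff.1 hev
  have hmem : ∀ t : ℝ, |t| < ε → x + t • d ∈ dualPolygon ℓ (convexHull ℝ (A : Set V)) :=
    fun t ht => (mem_dualPolygon_convexHull_iff hℓ).2 fun a ha =>
      hball (by simpa [Real.dist_eq] using ht) a ha
  have hseg : x ∈ openSegment ℝ (x + (ε / 2) • d) (x + (-(ε / 2)) • d) := by
    refine ⟨1 / 2, 1 / 2, by norm_num, by norm_num, by norm_num, ?_⟩
    module
  have heq := hx.2 (hmem (ε / 2) (by rw [abs_of_pos] <;> linarith))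
    (hmem (-(ε / 2)) (by rw [abs_neg, abs_of_pos] <;> linarith)) hseg
  have hzero : (ε / 2) • d = 0 := by simpa using heq
  rcases smul_eq_zero.1 hzero with h | h
  · linarith
  · exact hd0 h

lemma isPrimitive_of_mem_extremePoints_dual {ℓ : ℕ} (hℓ : 0 < ℓ) (A : Finset V)
    (hQ : IsLReflexive ℓ (convexHull ℝ (A : Set V))) {x : V}
    (hx : x ∈ extremePoints ℝ (dualPolygon ℓ (convexHull ℝ (A : Set V)))) : IsPrimitive x := by
  have hl : (0 : ℝ) < ℓ := by exact_mod_cast hℓ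
  obtain ⟨u, hu, v, hv, hxu, hxv, hdet⟩ := exists_tight_of_mem_extremePoints hℓ A hx
  have hxD := (mem_dualPolygon_iff hℓ).1 hx.1
  have hx0 : x ≠ 0 := by
    rintro rfl
    simp only [dotV, Prod.fst_zero, Prod.snd_zero, zero_mul, add_zero] at hxu
    linarith
  have huv : u ≠ v := by
    rintro rfl
    exact hdet (by ring)
  set F : Set V := {y ∈ convexHull ℝ (A : Set V) |
    ∀ z ∈ convexHull ℝ (A : Set V), dotV x y ≤ dotV x z} with hF
  have huF : u ∈ F := ⟨subset_convexHull ℝ _ hu, fun z hz => hxu.trans_le (hxD z hz)⟩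
  have hvF : v ∈ F := ⟨subset_convexHull ℝ _ hv, fun z hz => hxv.trans_le (hxD z hz)⟩
  obtain ⟨η, hη, hηF⟩ := hQ.edge_cond F ⟨⟨x, hx0, hF⟩, u, huF, v, hvF, huv⟩
  have hxη : x = η := eq_of_dotV_eq hdet (hxu.trans (hηF huF).symm) (hxv.trans (hηF hvF).symm)
  exact hxη ▸ hη

lemma finite_latticePts_inter {s : Set V} (hs : Bornology.IsBounded s) :
    (s ∩ latticePts).Finite := by
  obtain ⟨C, hC⟩ := isBounded_iff_forall_norm_le.1 hs
  refine ((Set.finite_Icc ((-⌈C⌉, -⌈C⌉) : ℤ × ℤ) (⌈C⌉, ⌈C⌉)).image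
    fun p : ℤ × ℤ => (((p.1 : ℝ), (p.2 : ℝ)) : V)).subset ?_
  rintro _ ⟨hx, p, rfl⟩
  refine ⟨p, ?_, rfl⟩
  have h := hC _ hx
  rw [Prod.norm_def, sup_le_iff, Real.norm_eq_abs, Real.norm_eq_abs, abs_le, abs_le] at h
  obtain ⟨⟨h1, h2⟩, h3, h4⟩ := h
  have hc := Int.le_ceil C
  refine ⟨⟨?_, ?_⟩, ?_, ?_⟩ <;> simp only <;> rw [← Int.cast_le (R := ℝ)] <;> push_cast <;>
    simp only at h1 h2 h3 h4 <;> linarith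

lemma isPolygon_of_finite_extremePoints {D : Set V} (hcomp : IsCompact D) (hconv : Convex ℝ D)
    (hint : (interior D).Nonempty) (hfin : (extremePoints ℝ D).Finite) : IsPolygon D := by
  have hD : D = convexHull ℝ (extremePoints ℝ D) := by
    conv_lhs => rw [← closure_convexHull_extremePoints hcomp hconv]
    exact (hfin.isCompact_convexHull ℝ).isClosed.closure_eq
  refine ⟨hfin.toFinset, by rwa [hfin.coe_toFinset], ?_⟩
  rw [hfin.coe_toFinset, ← interior_convexHull_nonempty_iff_affineSpan_eq_top, ← hD]
  exact hint

lemma edge_cond_dual {ℓ : ℕ} (hℓ : 0 < ℓ) {Q : Set V} (hQ : IsLReflexive ℓ Q)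
    (hconv : Convex ℝ Q) (hcl : IsClosed Q) (h0D : (0 : V) ∈ interior (dualPolygon ℓ Q))
    {F : Set V} (hF : IsEdge (dualPolygon ℓ Q) F) :
    ∃ η : V, IsPrimitive η ∧ F ⊆ {y : V | dotV η y = -(ℓ : ℝ)} := by
  have hl : (0 : ℝ) < ℓ := by exact_mod_cast hℓ
  obtain ⟨⟨η, hη, rfl⟩, p, hp, q, hq, hpq⟩ := hF
  -- The minimum of `⟨η, ·⟩` is negative, since `-t • η` lies in the dual for small `t > 0`.
  have hneg : dotV η p < 0 := by
    have hev : ∀ᶠ t in nhds (0 : ℝ), (-t) • η ∈ dualPolygon ℓ Q := by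
      have hcont : Continuous fun t : ℝ => (-t) • η := by fun_prop
      exact hcont.continuousAt.eventually_mem
        (by simpa using mem_interior_iff_mem_nhds.1 h0D)
    obtain ⟨ε, hε, hball⟩ := Metric.eventually_nhds_iff.1 hev
    have h := hp.2 _ (hball (y := ε / 2) (by
      rw [Real.dist_eq, sub_zero, abs_of_pos] <;> linarith))
    rw [dotV_smul_right] at h
    have hpos : 0 < dotV η η := by
      simp only [dotV]
      by_contra hle
      exact hη (Prod.ext
        (by simpa using (by nlinarith [mul_self_nonneg η.1, mul_self_nonneg η.2] :
          η.1 * η.1 = 0))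
        (by simpa using (by nlinarith [mul_self_nonneg η.1, mul_self_nonneg η.2] :
          η.2 * η.2 = 0)))
    nlinarith
  set c : ℝ := ℓ / (-dotV η p) with hc
  have hcpos : 0 < c := div_pos hl (neg_pos.2 hneg)
  have hcp : c * dotV η p = -ℓ := by
    rw [hc, div_neg, neg_mul, div_mul_cancel₀ _ hneg.ne]
  have hFeq : ∀ x ∈ {y ∈ dualPolygon ℓ Q | ∀ z ∈ dualPolygon ℓ Q, dotV η y ≤ dotV η z},
      dotV (c • η) x = -ℓ := fun x hx => by
    rw [dotV_smul_left, le_antisymm (hx.2 p hp.1) (hp.2 x hx.1), hcp]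
  have hyQ : c • η ∈ Q := mem_of_forall_dual hℓ hconv hcl (interior_subset hQ.zero_mem_interior)
    fun x hx => by
      rw [dotV_comm, dotV_smul_left, ← hcp]
      exact mul_le_mul_of_nonneg_left (hp.2 x hx) hcpos.le
  have hdet := det_ne_zero_of_ne (neg_ne_zero.2 hl.ne') (hFeq p hp) (hFeq q hq) hpq
  refine ⟨c • η, hQ.vertices_primitive _ ⟨hyQ, fun a ha b hb hab => ?_⟩, hFeq⟩
  obtain ⟨s, t, hs, ht, hst, hy⟩ := hab
  -- A convex combination of two numbers `≥ -ℓ` equals `-ℓ` only if both do.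
  have key : ∀ x ∈ {y ∈ dualPolygon ℓ Q | ∀ z ∈ dualPolygon ℓ Q, dotV η y ≤ dotV η z},
      dotV a x = dotV (c • η) x := fun x hx => by
    have hxa := (mem_dualPolygon_iff hℓ).1 hx.1 a ha
    have hxb := (mem_dualPolygon_iff hℓ).1 hx.1 b hb
    have h := hFeq x hx
    rw [h]
    rw [← hy, dotV_add_left, dotV_smul_left, dotV_smul_left] at h
    rw [dotV_comm] at hxa hxb
    refine le_antisymm ?_ hxa
    refine le_of_mul_le_mul_left ?_ hs
    have ht' : t = 1 - s := by linarith
    nlinarith [mul_le_mul_of_nonneg_left hxb ht.le]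
  exact eq_of_dotV_eq hdet (key p hp) (key q hq)

/-- **Duality of ℓ-reflexive polygons:** the dual `Q* = ℓ·Q°` of an ℓ-reflexive
polygon is again ℓ-reflexive. -/
theorem dual_is_ell_reflexive (ℓ : ℕ) (hℓ : 0 < ℓ) (Q : Set V) (hQ : IsLReflexive ℓ Q) :
    IsLReflexive ℓ (dualPolygon ℓ Q) := by
  obtain ⟨A, rfl, -⟩ := hQ.polygon
  have h0 := zero_mem_interior_dualPolygon hℓ A
  have hcomp := isCompact_dualPolygon hℓ hQ.zero_mem_interior
  have hprim := fun x hx => isPrimitive_of_mem_extremePoints_dual hℓ A hQ (x := x) hx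
  have hfin : (extremePoints ℝ (dualPolygon ℓ (convexHull ℝ (A : Set V)))).Finite :=
    (finite_latticePts_inter hcomp.isBounded).subset fun x hx => ⟨hx.1, (hprim x hx).1⟩
  exact ⟨isPolygon_of_finite_extremePoints hcomp (convex_dualPolygon hℓ _) ⟨0, h0⟩ hfin, hprim,
    h0, fun F hF => edge_cond_dual hℓ hQ (convex_convexHull ℝ _)
      (A.finite_toSet.isCompact_convexHull ℝ).isClosed h0 hF⟩
end
end

section
/- Lattice change (Kasprzyk–Nill): Let ℓ be a positive integer, Q ⊆ ℝ² an ℓ-reflexive polygon with respect to ℤ², Q* := ℓ·Q° its dual, Λ_Q the additive subgroup of ℤ² generated by frontier Q ∩ ℤ², and Λ_{Q*} the additive subgroup of ℤ² generated by frontier Q* ∩ ℤ². Then: (i) Λ_Q has index ℓ in ℤ², and Λ_{Q*} has index ℓ in ℤ²; (ii) {x ∈ ℝ² : ⟨x,v⟩ ∈ ℤ for all v ∈ Λ_Q} = {(1/ℓ)·w : w ∈ Λ_{Q*}}; (iii) interior(Q) ∩ Λ_Q = {0}, and every vertex v of Q satisfies conv{0,v} ∩ Λ_Q = {0,v} (so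 that (Q, Λ_Q) is a 1-reflexive pair). -/
/-!
For a primitive edge normal `η` of `Q`, let `Λ_η = kerMod ℓ η` be the lattice of all `p ∈ ℤ²` with
`ℓ ∣ ⟨η, p⟩`; its index is `ℓ` because `η` is primitive. The theorem rests on the fact that `Λ_η`
is the same for all edges and equals `Λ_Q`.

* If two edges share a vertex `v`, then `η' - η` is orthogonal to the primitive vector `v`, hence a
  multiple of the rotation of `v` by `90°`; since `ℓ ∣ det(v, p)` for `p ∈ Λ_η`, the two lattices
  agree (`kerMod_eq_of_common_vertex`). As the edges form a connected cycle, all of them agree.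
  The cyclic structure enters only through `exists_common_vertex`: the cones over the edges are
  closed and cover the connected set `ℝ² ∖ {0}`, so the cones over two complementary classes of
  edges meet, and they can only meet over a vertex.
* The lattice points on one edge already generate `Λ_η`: there are two of them differing by the
  rotation of `η` (`kerMod_le_of_edge`).
* `Q` is the intersection of the half-planes `⟨η, x⟩ ≥ -ℓ` over its primitive edge normals
  (`eq_cutOut_normalSet`, from the vertices of the polar polygon), and `Q*` is the intersection of
  the half-planes `⟨v, x⟩ ≥ -ℓ` over the vertices `v` of `Q` (`dualPolygon_eq`). Hence the
  generation argument also applies to `Q*` at a vertex `v` of `Q` lying on two edges, whose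
  normals play the role of the two lattice points. It gives `Λ_{Q*} = Λ_v`, which is the lattice of
  all `w ∈ ℤ²` with `ℓ ∣ ⟨w, p⟩` for all `p ∈ Λ_Q`, that is, `ℓ` times the dual of `Λ_Q`.
* For `x ∈ Λ_Q` in the interior of `Q`, every `⟨η, x⟩` is a multiple of `ℓ` larger than `-ℓ`,
  hence nonnegative, and boundedness of `Q` forces `x = 0`.
-/


open Set

noncomputable section

/-- The real embedding of an integer point. -/
def realVec (p : ℤ × ℤ) : V := ((p.1 : ℝ), (p.2 : ℝ))

/-- The lattice points on the boundary of `Q`, viewed in ℤ². -/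
def boundaryLat (Q : Set V) : Set (ℤ × ℤ) := {p : ℤ × ℤ | realVec p ∈ frontier Q}

/-- The subgroup of ℤ² generated by the boundary lattice points of `Q`. -/
def latChange (Q : Set V) : AddSubgroup (ℤ × ℤ) := AddSubgroup.closure (boundaryLat Q)

/-- A subgroup of ℤ² viewed as a subset of ℝ². -/
def embedSubgroup (Λ : AddSubgroup (ℤ × ℤ)) : Set V := {x : V | ∃ p ∈ Λ, x = realVec p}

/-! ### Arithmetic in `ℤ²` -/

/-- The standard inner product on `ℤ²`. -/
def idot (p q : ℤ × ℤ) : ℤ := p.1 * q.1 + p.2 * q.2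

lemma dotV_realVec (p q : ℤ × ℤ) : dotV (realVec p) (realVec q) = (idot p q : ℝ) := by
  simp [dotV, realVec, idot]

lemma realVec_zero : realVec 0 = 0 := by ext <;> simp [realVec]

lemma realVec_injective : Function.Injective realVec := by
  intro p q h
  simp only [realVec, Prod.mk.injEq, Int.cast_inj] at h
  exact Prod.ext h.1 h.2

lemma idot_comm (p q : ℤ × ℤ) : idot p q = idot q p := by simp only [idot]; ring

/-- The homomorphism `p ↦ ⟨η, p⟩ mod ℓ`. -/
def modHom (ℓ : ℕ) (η : ℤ × ℤ) : ℤ × ℤ →+ ZMod ℓ where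
  toFun p := ((idot η p : ℤ) : ZMod ℓ)
  map_zero' := by simp [idot]
  map_add' p q := by simp [idot]; ring

/-- The sublattice of all `p ∈ ℤ²` with `ℓ ∣ ⟨η, p⟩`. -/
def kerMod (ℓ : ℕ) (η : ℤ × ℤ) : AddSubgroup (ℤ × ℤ) := (modHom ℓ η).ker

lemma mem_kerMod {ℓ : ℕ} {η p : ℤ × ℤ} : p ∈ kerMod ℓ η ↔ (ℓ : ℤ) ∣ idot η p := by
  rw [kerMod, AddMonoidHom.mem_ker]
  exact ZMod.intCast_zmod_eq_zero_iff_dvd _ _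

lemma index_kerMod (ℓ : ℕ) {η : ℤ × ℤ} (h : IsCoprime η.1 η.2) : (kerMod ℓ η).index = ℓ := by
  have hs : Function.Surjective (modHom ℓ η) := by
    intro z
    obtain ⟨n, rfl⟩ := ZMod.intCast_surjective z
    obtain ⟨a, b, hab⟩ := h
    refine ⟨(n * a, n * b), ?_⟩
    change ((idot η (n * a, n * b) : ℤ) : ZMod ℓ) = _
    congr 1
    simp only [idot]
    linear_combination n * hab
  rw [kerMod, AddSubgroup.index_ker, AddMonoidHom.range_eq_top.2 hs]
  simp

/-- An integer vector orthogonal to a primitive one is a multiple of its rotation by `90°`. -/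
lemma exists_mul_rot {η q : ℤ × ℤ} (h : IsCoprime η.1 η.2) (hq : idot η q = 0) :
    ∃ k : ℤ, q = (-(k * η.2), k * η.1) := by
  obtain ⟨a, b, hab⟩ := h
  simp only [idot] at hq
  refine ⟨a * q.2 - b * q.1, Prod.ext ?_ ?_⟩
  · simp only
    linear_combination (-q.1) * hab + a * hq
  · simp only
    linear_combination (-q.2) * hab + b * hq

lemma dvd_of_coprime_mul {m a b x : ℤ} (h : IsCoprime a b) (ha : m ∣ x * a) (hb : m ∣ x * b) :
    m ∣ x := by
  obtain ⟨r, s, hrs⟩ := h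
  have : x = r * (x * a) + s * (x * b) := by linear_combination (-x) * hrs
  rw [this]
  exact dvd_add (ha.mul_left _) (hb.mul_left _)

/-- Two vectors whose inner products with a primitive `η` are divisible by `m` have determinant
divisible by `m`. -/
lemma dvd_det {m : ℤ} {η v p : ℤ × ℤ} (h : IsCoprime η.1 η.2) (hv : m ∣ idot η v)
    (hp : m ∣ idot η p) : m ∣ v.1 * p.2 - v.2 * p.1 := by
  refine dvd_of_coprime_mul h ?_ ?_
  · have : (v.1 * p.2 - v.2 * p.1) * η.1 = idot η v * p.2 - idot η p * v.2 := by
      simp only [idot]; ring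
    rw [this]
    exact dvd_sub (hv.mul_right _) (hp.mul_right _)
  · have : (v.1 * p.2 - v.2 * p.1) * η.2 = idot η p * v.1 - idot η v * p.1 := by
      simp only [idot]; ring
    rw [this]
    exact dvd_sub (hp.mul_right _) (hv.mul_right _)

lemma dvd_idot_of_dvd_det {m : ℤ} {w v p : ℤ × ℤ} (h : IsCoprime v.1 v.2) (hv : m ∣ idot w v)
    (hd : m ∣ v.1 * p.2 - v.2 * p.1) : m ∣ idot w p := by
  refine dvd_of_coprime_mul h ?_ ?_
  · have : idot w p * v.1 = idot w v * p.1 + (v.1 * p.2 - v.2 * p.1) * w.2 := by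
      simp only [idot]; ring
    rw [this]
    exact dvd_add (hv.mul_right _) (hd.mul_right _)
  · have : idot w p * v.2 = idot w v * p.2 - (v.1 * p.2 - v.2 * p.1) * w.1 := by
      simp only [idot]; ring
    rw [this]
    exact dvd_sub (hv.mul_right _) (hd.mul_right _)

lemma kerMod_le_of_common_vertex {ℓ : ℕ} {η η' v : ℤ × ℤ} (h : IsCoprime η.1 η.2)
    (hv : IsCoprime v.1 v.2) (h1 : idot η v = -ℓ) (h2 : idot η' v = -ℓ) :
    kerMod ℓ η ≤ kerMod ℓ η' := by
  intro p hp
  rw [mem_kerMod] at hp ⊢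
  have hd := dvd_det h (by rw [h1]; exact (dvd_refl _).neg_right) hp
  have h0 : idot v (η' - η) = 0 := by
    simp only [idot, Prod.fst_sub, Prod.snd_sub] at *
    linarith
  obtain ⟨k, hk⟩ := exists_mul_rot hv h0
  have hk1 := congrArg Prod.fst hk
  have hk2 := congrArg Prod.snd hk
  simp only [Prod.fst_sub, Prod.snd_sub] at hk1 hk2
  have : idot η' p = idot η p + k * (v.1 * p.2 - v.2 * p.1) := by
    simp only [idot]
    linear_combination p.1 * hk1 + p.2 * hk2
  rw [this]
  exact dvd_add hp (hd.mul_left _)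

/-- Adjacent edges give the same sublattice: if the lines of `η` and `η'` at height `-ℓ` meet in
a primitive point, then `ℓ ∣ ⟨η, p⟩` and `ℓ ∣ ⟨η', p⟩` are equivalent. -/
lemma kerMod_eq_of_common_vertex {ℓ : ℕ} {η η' v : ℤ × ℤ} (h : IsCoprime η.1 η.2)
    (h' : IsCoprime η'.1 η'.2) (hv : IsCoprime v.1 v.2) (h1 : idot η v = -ℓ)
    (h2 : idot η' v = -ℓ) : kerMod ℓ η = kerMod ℓ η' :=
  le_antisymm (kerMod_le_of_common_vertex h hv h1 h2) (kerMod_le_of_common_vertex h' hv h2 h1)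

/-- A subgroup containing all lattice points of a convex set `K` on the line `⟨η, ·⟩ = -ℓ`
contains `kerMod ℓ η` as soon as there are two such points: the segment between them contains
two lattice points differing by the rotation of `η`. -/
lemma kerMod_le_of_edge {ℓ : ℕ} {η v v' : ℤ × ℤ} {K : Set V} {H : AddSubgroup (ℤ × ℤ)}
    (hK : Convex ℝ K) (h : IsCoprime η.1 η.2)
    (hH : ∀ p, realVec p ∈ K → idot η p = -ℓ → p ∈ H)
    (hv : realVec v ∈ K) (hv' : realVec v' ∈ K) (hne : v ≠ v')
    (h1 : idot η v = -ℓ) (h2 : idot η v' = -ℓ) : kerMod ℓ η ≤ H := by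
  have hvH := hH v hv h1
  have hJ : (-η.2, η.1) ∈ H := by
    -- Ordering `v`, `v'` along the edge makes the multiple of the rotated normal positive.
    have key : ∀ v v' : ℤ × ℤ, realVec v ∈ K → realVec v' ∈ K → idot η v = -ℓ → idot η v' = -ℓ →
        ∀ k : ℤ, 0 < k → v' - v = (-(k * η.2), k * η.1) → (-η.2, η.1) ∈ H := by
      intro v v' hv hv' h1 h2 k hk hkv
      have hk1 := congrArg Prod.fst hkv
      have hk2 := congrArg Prod.snd hkv
      simp only [Prod.fst_sub, Prod.snd_sub] at hk1 hk2
      have hkr : (0 : ℝ) < k := by exact_mod_cast hk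
      have hk1r : ((v'.1 : ℝ) - v.1) = -(k * η.2) := by exact_mod_cast hk1
      have hk2r : ((v'.2 : ℝ) - v.2) = k * η.1 := by exact_mod_cast hk2
      have hmem : realVec (v + (-η.2, η.1)) ∈ K := by
        have hle : (k : ℝ)⁻¹ ≤ 1 := inv_le_one_of_one_le₀ (by exact_mod_cast hk)
        have := hK hv hv' (sub_nonneg.2 hle) (inv_nonneg.2 hkr.le) (by ring)
        convert this using 1
        ext
        · simp only [realVec, Prod.fst_add, Prod.smul_fst, smul_eq_mul]
          push_cast
          field_simp
          linear_combination -hk1r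
        · simp only [realVec, Prod.snd_add, Prod.smul_snd, smul_eq_mul]
          push_cast
          field_simp
          linear_combination -hk2r
      have h3 := hH _ hmem (by simp only [idot, Prod.fst_add, Prod.snd_add] at *; linarith)
      simpa using H.sub_mem h3 (hH v hv h1)
    obtain ⟨k, hk⟩ := exists_mul_rot (q := v' - v) h
      (by simp only [idot, Prod.fst_sub, Prod.snd_sub] at *; linarith)
    rcases lt_trichotomy k 0 with h0 | h0 | h0
    · refine key v' v hv' hv h2 h1 (-k) (by omega) ?_
      rw [← neg_sub, hk]; simp
    · subst h0
      exact absurd (sub_eq_zero.1 (by rw [hk]; simp)) hne.symm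
    · exact key v v' hv hv' h1 h2 k h0 hk
  intro q hq
  obtain ⟨c, hc⟩ := mem_kerMod.1 hq
  have h0 : idot η (q + c • v) = 0 := by
    simp only [idot, Prod.fst_add, Prod.snd_add, Prod.smul_fst, Prod.smul_snd, smul_eq_mul] at *
    linear_combination hc + c * h1
  obtain ⟨k, hk⟩ := exists_mul_rot h h0
  have hq' : q = k • (-η.2, η.1) - c • v := by
    rw [eq_sub_iff_add_eq, hk]; simp
  rw [hq']
  exact H.sub_mem (H.zsmul_mem hJ _) (H.zsmul_mem hvH _)

lemma coprime_of_isPrimitive {p : ℤ × ℤ} (h : IsPrimitive (realVec p)) : IsCoprime p.1 p.2 := by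
  obtain ⟨-, h0, hs⟩ := h
  rw [Int.isCoprime_iff_gcd_eq_one]
  have hg0 : Int.gcd p.1 p.2 ≠ 0 := by
    intro hg
    rw [Int.gcd_eq_zero_iff] at hg
    exact h0 (by simp [realVec, hg.1, hg.2])
  obtain ⟨a, ha⟩ := Int.gcd_dvd_left p.1 p.2
  obtain ⟨b, hb⟩ := Int.gcd_dvd_right p.1 p.2
  set g := Int.gcd p.1 p.2 with hg
  have hgpos : (1 : ℝ) ≤ g := by exact_mod_cast Nat.one_le_iff_ne_zero.2 hg0
  have har : (p.1 : ℝ) = g * a := by exact_mod_cast ha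
  have hbr : (p.2 : ℝ) = g * b := by exact_mod_cast hb
  have hmem : realVec (a, b) ∈ segment ℝ (0 : V) (realVec p) ∩ latticePts := by
    refine ⟨⟨1 - (g : ℝ)⁻¹, (g : ℝ)⁻¹, sub_nonneg.2 (inv_le_one_of_one_le₀ hgpos),
      by positivity, by ring, ?_⟩, (a, b), rfl⟩
    ext
    · simp [realVec, har]; field_simp
    · simp [realVec, hbr]; field_simp
  rw [hs] at hmem
  rcases hmem with h1 | h1
  · simp only [realVec, Prod.mk_eq_zero, Int.cast_eq_zero] at h1
    exact absurd (by simp [realVec, har, hbr, h1.1, h1.2]) h0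
  · have h2 := realVec_injective h1
    rw [← h2] at ha hb h0
    simp only at ha hb
    have h3 : a * (g - 1 : ℤ) = 0 := by linarith
    have h4 : b * (g - 1 : ℤ) = 0 := by linarith
    by_contra hne
    have h5 : (g - 1 : ℤ) ≠ 0 := by omega
    exact h0 (by simp [realVec, (mul_eq_zero.1 h3).resolve_right h5,
      (mul_eq_zero.1 h4).resolve_right h5])

/-! ### Polygons cut out by finitely many half-planes -/

/-- The intersection of the half-planes `⟨η, x⟩ ≥ -ℓ` for `η ∈ N`. -/
def cutOut (ℓ : ℕ) (N : Set (ℤ × ℤ)) : Set V := {x | ∀ η ∈ N, -(ℓ : ℝ) ≤ dotV (realVec η) x}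

lemma continuous_dotV (u : V) : Continuous (dotV u) := by
  unfold dotV; fun_prop

lemma dotV_add (u x y : V) : dotV u (x + y) = dotV u x + dotV u y := by
  simp only [dotV, Prod.fst_add, Prod.snd_add]; ring

lemma dotV_smul (u x : V) (c : ℝ) : dotV u (c • x) = c * dotV u x := by
  simp only [dotV, Prod.smul_fst, Prod.smul_snd, smul_eq_mul]; ring

lemma convex_ge (u : V) (c : ℝ) : Convex ℝ {x : V | c ≤ dotV u x} := by
  intro x hx y hy a b ha hb hab
  simp only [mem_ofPred_eq, dotV_add, dotV_smul] at *
  have : c = a * c + b * c := by rw [← add_mul, hab, one_mul]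
  rw [this]
  gcongr

lemma convex_cutOut (ℓ : ℕ) (N : Set (ℤ × ℤ)) : Convex ℝ (cutOut ℓ N) := by
  have : cutOut ℓ N = ⋂ η ∈ N, {x : V | -(ℓ : ℝ) ≤ dotV (realVec η) x} := by
    ext; simp [cutOut]
  rw [this]
  exact convex_iInter₂ fun η _ => convex_ge _ _

lemma isClosed_cutOut (ℓ : ℕ) (N : Set (ℤ × ℤ)) : IsClosed (cutOut ℓ N) := by
  have : cutOut ℓ N = ⋂ η ∈ N, {x : V | -(ℓ : ℝ) ≤ dotV (realVec η) x} := by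
    ext; simp [cutOut]
  rw [this]
  exact isClosed_biInter fun η _ => isClosed_le continuous_const (continuous_dotV _)

lemma exists_gt_one_smul_mem {Q : Set V} {p : V} (hp : p ∈ interior Q) :
    ∃ t : ℝ, 1 < t ∧ t • p ∈ Q := by
  have hc : Filter.Tendsto (fun t : ℝ => t • p) (nhdsWithin 1 (Ioi 1)) (nhds p) := by
    have : Continuous fun t : ℝ => t • p := by fun_prop
    simpa using (this.tendsto 1).mono_left nhdsWithin_le_nhds
  obtain ⟨t, h1, h2⟩ := ((hc.eventually (mem_interior_iff_mem_nhds.1 hp)).and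
    self_mem_nhdsWithin).exists
  exact ⟨t, h2, h1⟩

lemma mem_interior_cutOut {ℓ : ℕ} (hℓ : 0 < ℓ) {N : Set (ℤ × ℤ)} (hN : N.Finite) {x : V} :
    x ∈ interior (cutOut ℓ N) ↔ ∀ η ∈ N, -(ℓ : ℝ) < dotV (realVec η) x := by
  constructor
  · intro hx η hη
    refine lt_of_le_of_ne (interior_subset hx η hη) fun heq => ?_
    obtain ⟨t, ht, hmem⟩ := exists_gt_one_smul_mem hx
    have := hmem η hη
    rw [dotV_smul, ← heq] at this
    have hl : (0 : ℝ) < ℓ := by exact_mod_cast hℓ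
    nlinarith
  · intro hx
    rw [mem_interior]
    refine ⟨⋂ η ∈ N, {x : V | -(ℓ : ℝ) < dotV (realVec η) x}, ?_, ?_, ?_⟩
    · intro y hy η hη
      simp only [mem_iInter] at hy
      exact (hy η hη).le
    · exact hN.isOpen_biInter fun η _ => isOpen_lt continuous_const (continuous_dotV _)
    · exact mem_iInter₂.2 hx

lemma mem_frontier_cutOut {ℓ : ℕ} (hℓ : 0 < ℓ) {N : Set (ℤ × ℤ)} (hN : N.Finite) {x : V} :
    x ∈ frontier (cutOut ℓ N) ↔ x ∈ cutOut ℓ N ∧ ∃ η ∈ N, dotV (realVec η) x = -ℓ := by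
  rw [(isClosed_cutOut ℓ N).frontier_eq, mem_sdiff, mem_interior_cutOut hℓ hN]
  refine and_congr_right fun hx => ?_
  push Not
  exact exists_congr fun η => and_congr_right fun hη =>
    ⟨fun h => le_antisymm h (hx η hη), fun h => h.le⟩

/-- If all `⟨η, x⟩` are nonnegative, the ray through `x` stays in the polygon. -/
lemma exists_neg_of_bounded {ℓ : ℕ} {N : Set (ℤ × ℤ)} (hb : Bornology.IsBounded (cutOut ℓ N))
    {x : V} (hx : x ≠ 0) : ∃ η ∈ N, dotV (realVec η) x < 0 := by
  by_contra! hcon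
  obtain ⟨C, hC⟩ := hb.exists_norm_le
  have hmem : ((|C| + 1) / ‖x‖) • x ∈ cutOut ℓ N := by
    intro η hη
    rw [dotV_smul]
    have h1 : 0 ≤ (|C| + 1) / ‖x‖ * dotV (realVec η) x :=
      mul_nonneg (by positivity) (hcon η hη)
    have h2 : (0 : ℝ) ≤ ℓ := by positivity
    linarith
  have h1 := hC _ hmem
  have hx' : ‖x‖ ≠ 0 := norm_ne_zero_iff.2 hx
  rw [norm_smul, norm_div, norm_norm, div_mul_cancel₀ _ hx', Real.norm_eq_abs,
    abs_of_pos (by positivity)] at h1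
  linarith [le_abs_self C]

/-- Distinct vectors having the same nonzero inner product with `v` are linearly independent. -/
lemma eq_zero_of_dotV {a b v y : V} {c : ℝ} (hc : c ≠ 0) (hab : a ≠ b) (ha : dotV a v = c)
    (hb : dotV b v = c) (h1 : dotV a y = 0) (h2 : dotV b y = 0) : y = 0 := by
  simp only [dotV] at *
  have hdet : a.1 * b.2 - a.2 * b.1 ≠ 0 := by
    intro h
    apply hab
    ext
    · apply mul_left_cancel₀ hc
      linear_combination v.2 * h - a.1 * hb + b.1 * ha
    · apply mul_left_cancel₀ hc
      linear_combination (-v.1) * h - a.2 * hb + b.2 * ha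
  ext
  · exact (mul_eq_zero.1 (show (a.1 * b.2 - a.2 * b.1) * y.1 = 0 by
      linear_combination b.2 * h1 - a.2 * h2)).resolve_left hdet
  · exact (mul_eq_zero.1 (show (a.1 * b.2 - a.2 * b.1) * y.2 = 0 by
      linear_combination a.1 * h2 - b.1 * h1)).resolve_left hdet

lemma eq_of_openSegment_bound {u v a b : V} {c : ℝ} (hv : v ∈ openSegment ℝ a b)
    (hu : dotV u v = c) (ha : c ≤ dotV u a) (hb : c ≤ dotV u b) : dotV u a = c := by
  obtain ⟨s, t, hs, ht, hst, rfl⟩ := hv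
  rw [dotV_add, dotV_smul, dotV_smul] at hu
  have h1 : t * c ≤ t * dotV u b := by gcongr
  have h2 : s * dotV u a ≤ s * c := by
    have : s * c + t * c = c := by rw [← add_mul, hst, one_mul]
    linarith
  exact le_antisymm (le_of_mul_le_mul_left h2 hs) ha

lemma dotV_sub (u x y : V) : dotV u (x - y) = dotV u x - dotV u y := by
  simp only [dotV, Prod.fst_sub, Prod.snd_sub]; ring

/-- The edges of a polygon form a connected cycle: however the edge normals are split into two
nonempty classes, some vertex lies on an edge of each class. The cones over the edges of either
class form a closed set; together they cover the connected set `ℝ² ∖ {0}`, so they meet there. -/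
lemma exists_common_vertex {ℓ : ℕ} (hℓ : 0 < ℓ) {N : Set (ℤ × ℤ)} (hN : N.Finite)
    (hb : Bornology.IsBounded (cutOut ℓ N))
    (htight : ∀ η ∈ N, ∃ x ∈ cutOut ℓ N, dotV (realVec η) x = -ℓ)
    (S : Set (ℤ × ℤ)) (h1 : (N ∩ S).Nonempty) (h2 : (N \ S).Nonempty) :
    ∃ η ∈ N ∩ S, ∃ η' ∈ N \ S, ∃ v ∈ extremePoints ℝ (cutOut ℓ N),
      dotV (realVec η) v = -ℓ ∧ dotV (realVec η') v = -ℓ := by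
  have hl : (0 : ℝ) < ℓ := by exact_mod_cast hℓ
  let C : ℤ × ℤ → Set V := fun η => {x | ∀ η' ∈ N, dotV (realVec η) x ≤ dotV (realVec η') x}
  have hC : ∀ η, IsClosed (C η) := by
    intro η
    have : C η = ⋂ η' ∈ N, {x : V | dotV (realVec η) x ≤ dotV (realVec η') x} := by
      ext; simp [C]
    rw [this]
    exact isClosed_biInter fun η' _ => isClosed_le (continuous_dotV _) (continuous_dotV _)
  have hrank : 1 < Module.rank ℝ V := by
    rw [rank_prod', Module.rank_self]
    norm_num
  have hconn : IsPreconnected ({(0 : V)}ᶜ) :=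
    (isConnected_compl_singleton_of_one_lt_rank hrank 0).isPreconnected
  rw [isPreconnected_closed_iff] at hconn
  have hne : ∀ η ∈ N, ∃ x, x ≠ 0 ∧ x ∈ C η := by
    intro η hη
    obtain ⟨x, hx, hxt⟩ := htight η hη
    refine ⟨x, ?_, fun η' hη' => hxt ▸ hx η' hη'⟩
    rintro rfl
    simp only [dotV, Prod.fst_zero, Prod.snd_zero, mul_zero, add_zero] at hxt
    linarith
  have hNne : N.Nonempty := h1.mono inter_subset_left
  obtain ⟨x, hx0, hx1, hx2⟩ := hconn (⋃ η ∈ N ∩ S, C η) (⋃ η ∈ N \ S, C η)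
    ((hN.subset inter_subset_left).isClosed_biUnion fun η _ => hC η)
    ((hN.subset sdiff_subset).isClosed_biUnion fun η _ => hC η)
    (by
      intro x _
      obtain ⟨η, hη, hmin⟩ := hN.exists_minimalFor (fun η => dotV (realVec η) x) N hNne
      have hxC : x ∈ C η := fun η' hη' => (le_total _ _).elim id fun h => hmin hη' h
      by_cases hS : η ∈ S
      · exact Or.inl (mem_biUnion (show η ∈ N ∩ S from ⟨hη, hS⟩) hxC)
      · exact Or.inr (mem_biUnion (show η ∈ N \ S from ⟨hη, hS⟩) hxC))
    (by
      obtain ⟨η, hη⟩ := h1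
      obtain ⟨x, hx, hxC⟩ := hne η hη.1
      exact ⟨x, hx, mem_biUnion hη hxC⟩)
    (by
      obtain ⟨η, hη⟩ := h2
      obtain ⟨x, hx, hxC⟩ := hne η hη.1
      exact ⟨x, hx, mem_biUnion hη hxC⟩)
  simp only [mem_iUnion] at hx1 hx2
  obtain ⟨η, hη, hxη⟩ := hx1
  obtain ⟨η', hη', hxη'⟩ := hx2
  obtain ⟨θ, hθ, hθx⟩ := exists_neg_of_bounded hb hx0
  have hneg : dotV (realVec η) x < 0 := (hxη θ hθ).trans_lt hθx
  have heq : dotV (realVec η') x = dotV (realVec η) x :=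
    le_antisymm (hxη' η hη.1) (hxη η' hη'.1)
  set m := dotV (realVec η) x with hm
  -- Rescaling `x` onto the boundary of the polygon gives the vertex.
  have hscale : (ℓ : ℝ) / (-m) * m = -ℓ := by
    rw [div_neg, neg_mul, div_mul_cancel₀ _ hneg.ne]
  have hpos : 0 < (ℓ : ℝ) / (-m) := div_pos hl (by linarith)
  have ht1 : dotV (realVec η) (((ℓ : ℝ) / (-m)) • x) = -ℓ := by rw [dotV_smul, ← hm, hscale]
  have ht2 : dotV (realVec η') (((ℓ : ℝ) / (-m)) • x) = -ℓ := by rw [dotV_smul, heq, hscale]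
  have hηη' : realVec η ≠ realVec η' := fun h =>
    hη'.2 (realVec_injective h ▸ hη.2)
  refine ⟨η, hη, η', hη', ((ℓ : ℝ) / (-m)) • x, ?_, ht1, ht2⟩
  rw [mem_extremePoints_iff_left]
  refine ⟨?_, ?_⟩
  · intro θ hθ
    rw [dotV_smul, ← hscale]
    exact mul_le_mul_of_nonneg_left (hxη θ hθ) hpos.le
  · intro a ha b hb' hab
    have e1 := eq_of_openSegment_bound hab ht1 (ha η hη.1) (hb' η hη.1)
    have e2 := eq_of_openSegment_bound hab ht2 (ha η' hη'.1) (hb' η' hη'.1)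
    exact sub_eq_zero.1 (eq_zero_of_dotV (c := -ℓ) (by linarith) hηη' ht1 ht2
      (by rw [dotV_sub, e1, ht1, sub_self]) (by rw [dotV_sub, e2, ht2, sub_self]))

/-! ### Edge normals of a reflexive polygon -/

/-- A vertex `u` of the polar polygon is tight at two distinct vertices of `Q`: otherwise `u`
could be moved in both directions along a line inside the polar. -/
lemma exists_two_tight {Q E : Set V} (hE : E.Finite) (hQ : Q = convexHull ℝ E) {u : V}
    (hu : u ∈ extremePoints ℝ (polarPolygon Q)) :
    ∃ v ∈ E, ∃ v' ∈ E, v ≠ v' ∧ dotV u v = -1 ∧ dotV u v' = -1 := by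
  by_contra! hcon
  have hpol : ∀ w, (∀ v ∈ E, -1 ≤ dotV w v) → w ∈ polarPolygon Q := by
    intro w hw y hy
    rw [hQ] at hy
    exact convexHull_min hw (convex_ge w (-1)) hy
  have huE : ∀ v ∈ E, -1 ≤ dotV u v := fun v hv =>
    hu.1 v (hQ ▸ subset_convexHull ℝ E hv)
  obtain ⟨d, hd0, hd⟩ : ∃ d : V, d ≠ 0 ∧ ∀ v ∈ E, dotV u v = -1 → dotV d v = 0 := by
    by_cases h : ∃ v ∈ E, dotV u v = -1
    · obtain ⟨v, hv, huv⟩ := h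
      refine ⟨(-v.2, v.1), ?_, ?_⟩
      · intro h0
        simp only [Prod.mk_eq_zero, neg_eq_zero] at h0
        simp [dotV, h0.1, h0.2] at huv
      · intro v' hv' huv'
        have : v = v' := by
          by_contra hne
          exact hcon v hv v' hv' hne huv huv'
        subst this
        simp only [dotV]; ring
    · push Not at h
      exact ⟨(1, 0), by simp, fun v hv h' => absurd h' (h v hv)⟩
  have hev : ∀ᶠ ε : ℝ in nhds 0, u + ε • d ∈ polarPolygon Q := by
    have : ∀ᶠ ε : ℝ in nhds 0, ∀ v ∈ E, -1 ≤ dotV (u + ε • d) v := by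
      rw [Filter.eventually_all_finite hE]
      intro v hv
      have hexp : ∀ ε : ℝ, dotV (u + ε • d) v = dotV u v + ε * dotV d v := by
        intro ε
        rw [dotV_comm, dotV_add, dotV_smul, dotV_comm v u, dotV_comm v d]
      by_cases h : dotV u v = -1
      · exact Filter.Eventually.of_forall fun ε => by rw [hexp, hd v hv h, mul_zero, h]; simp
      · have hlt : -1 < dotV u v + 0 * dotV d v := by
          simpa using lt_of_le_of_ne (huE v hv) (Ne.symm h)
        have hc : Continuous fun ε : ℝ => dotV u v + ε * dotV d v := by fun_prop
        filter_upwards [(hc.tendsto 0).eventually (lt_mem_nhds hlt)] with ε hε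
        rw [hexp]; exact hε.le
    exact this.mono fun ε hε => hpol _ hε
  obtain ⟨δ, hδ, hball⟩ := Metric.eventually_nhds_iff.1 hev
  have hp := hball (y := δ / 2) (by rw [Real.dist_eq, sub_zero, abs_of_pos] <;> linarith)
  have hm := hball (y := -(δ / 2)) (by
    rw [Real.dist_eq, sub_zero, abs_neg, abs_of_pos] <;> linarith)
  have hseg : u ∈ openSegment ℝ (u + (δ / 2) • d) (u + (-(δ / 2)) • d) :=
    ⟨1 / 2, 1 / 2, by norm_num, by norm_num, by norm_num, by
      ext <;> simp <;> ring⟩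
  have h := (mem_extremePoints_iff_left.1 hu).2 _ hp _ hm hseg
  have h0 : (δ / 2) • d = 0 := by simpa using h
  rcases smul_eq_zero.1 h0 with h0 | h0
  · linarith
  · exact hd0 h0

lemma isCompact_polar {Q : Set V} (h0 : (0 : V) ∈ interior Q) : IsCompact (polarPolygon Q) := by
  obtain ⟨r, hr, hball⟩ := Metric.mem_nhds_iff.1 (mem_interior_iff_mem_nhds.1 h0)
  have hclosed : IsClosed (polarPolygon Q) := by
    have : polarPolygon Q = ⋂ y ∈ Q, {x : V | -1 ≤ dotV y x} := by
      ext x; simp [polarPolygon, dotV_comm x]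
    rw [this]
    exact isClosed_biInter fun y _ => isClosed_le continuous_const (continuous_dotV _)
  refine IsCompact.of_isClosed_subset
    (isCompact_Icc (a := ((-(2 / r), -(2 / r)) : V)) (b := (2 / r, 2 / r))) hclosed ?_
  intro u hu
  have key : ∀ s : ℝ, |s| < r → -1 ≤ u.1 * s ∧ -1 ≤ u.2 * s := by
    intro s hs
    have h1 := hu (s, 0) (hball (by simp [Prod.norm_def, hs]))
    have h2 := hu (0, s) (hball (by simp [Prod.norm_def, hs]))
    simp only [dotV, mul_zero, add_zero, zero_add] at h1 h2
    exact ⟨h1, h2⟩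
  have hp := key (r / 2) (by rw [abs_of_pos] <;> linarith)
  have hn := key (-(r / 2)) (by rw [abs_neg, abs_of_pos] <;> linarith)
  simp only [mem_Icc, Prod.le_def]
  have e : 2 / r * (r / 2) = 1 := by field_simp
  have hr2 : 0 < r / 2 := by linarith
  refine ⟨⟨?_, ?_⟩, ?_, ?_⟩ <;> refine le_of_mul_le_mul_right ?_ hr2 <;>
    linarith [hp.1, hp.2, hn.1, hn.2]

/-- Every point outside `Q` violates the inequality given by some vertex of the polar. -/
lemma exists_extreme_polar {Q : Set V} (hconv : Convex ℝ Q) (hclosed : IsClosed Q)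
    (h0 : (0 : V) ∈ interior Q) {x : V} (hx : x ∉ Q) :
    ∃ u ∈ extremePoints ℝ (polarPolygon Q), dotV u x < -1 := by
  obtain ⟨f, s, hfs, hsx⟩ := geometric_hahn_banach_closed_point hconv hclosed hx
  have hs : 0 < s := by simpa using hfs 0 (interior_subset h0)
  have hf : ∀ y : V, f y = f (1, 0) * y.1 + f (0, 1) * y.2 := by
    intro y
    have : y = y.1 • ((1, 0) : V) + y.2 • ((0, 1) : V) := by ext <;> simp
    conv_lhs => rw [this]
    rw [map_add, map_smul, map_smul, smul_eq_mul, smul_eq_mul]; ring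
  let u₀ : V := (-(f (1, 0) / s), -(f (0, 1) / s))
  have hu₀ : ∀ y, dotV u₀ y = -(f y / s) := by
    intro y
    rw [hf y]
    simp only [dotV, u₀]; ring
  have hu₀mem : u₀ ∈ polarPolygon Q := by
    intro y hy
    rw [hu₀, neg_le_neg_iff, div_le_one hs]
    exact (hfs y hy).le
  have hu₀x : dotV u₀ x < -1 := by
    rw [hu₀, neg_lt_neg_iff, one_lt_div hs]
    exact hsx
  have hcomp := isCompact_polar h0
  -- The face of the polar on which `⟨·, x⟩` is minimal has an extreme point.
  let F : Set V := {u ∈ polarPolygon Q | ∀ w ∈ polarPolygon Q, dotV x u ≤ dotV x w}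
  obtain ⟨m, hm, hmin⟩ := hcomp.exists_isMinOn ⟨u₀, hu₀mem⟩ (continuous_dotV x).continuousOn
  have hFc : IsCompact F := by
    refine hcomp.of_isClosed_subset ?_ (sep_subset _ _)
    have : F = polarPolygon Q ∩ {u | dotV x u ≤ dotV x m} := by
      ext u
      exact and_congr_right fun hu => ⟨fun h => h m hm, fun h w hw => h.trans (hmin hw)⟩
    rw [this]
    exact hcomp.isClosed.inter (isClosed_le (continuous_dotV x) continuous_const)
  obtain ⟨u, hu⟩ := hFc.extremePoints_nonempty ⟨m, hm, fun w hw => hmin hw⟩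
  refine ⟨u, ?_, ?_⟩
  · rw [mem_extremePoints_iff_left]
    refine ⟨hu.1.1, fun a ha b hb hab => ?_⟩
    have hab' : u ∈ openSegment ℝ b a := by rwa [openSegment_symm]
    have ea := eq_of_openSegment_bound hab rfl (hu.1.2 a ha) (hu.1.2 b hb)
    have eb := eq_of_openSegment_bound hab' rfl (hu.1.2 b hb) (hu.1.2 a ha)
    exact (mem_extremePoints_iff_left.1 hu).2 a ⟨ha, fun w hw => ea ▸ hu.1.2 w hw⟩ b
      ⟨hb, fun w hw => eb ▸ hu.1.2 w hw⟩ hab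
  · rw [dotV_comm]
    refine (hu.1.2 u₀ hu₀mem).trans_lt ?_
    rwa [dotV_comm]

lemma finite_of_bounded {S : Set (ℤ × ℤ)} {B : Set V} (hB : Bornology.IsBounded B)
    (h : ∀ p ∈ S, realVec p ∈ B) : S.Finite := by
  obtain ⟨C, hC⟩ := hB.exists_norm_le
  refine (Set.finite_Icc ((-⌈C⌉, -⌈C⌉) : ℤ × ℤ) (⌈C⌉, ⌈C⌉)).subset fun p hp => ?_
  have h1 := hC _ (h p hp)
  have ha : |(p.1 : ℝ)| ≤ ⌈C⌉ := ((norm_fst_le (realVec p)).trans h1).trans (Int.le_ceil C)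
  have hb : |(p.2 : ℝ)| ≤ ⌈C⌉ := ((norm_snd_le (realVec p)).trans h1).trans (Int.le_ceil C)
  rw [abs_le] at ha hb
  refine ⟨⟨?_, ?_⟩, ?_, ?_⟩
  · exact_mod_cast ha.1
  · exact_mod_cast hb.1
  · exact_mod_cast ha.2
  · exact_mod_cast hb.2

/-- The vertices of `Q` as points of `ℤ²`. -/
def vertexSet (Q : Set V) : Set (ℤ × ℤ) := {v | realVec v ∈ extremePoints ℝ Q}

/-- The primitive edge normals of `Q`: primitive `η` with `⟨η, ·⟩ ≥ -ℓ` on `Q`, with equality at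
two distinct vertices. -/
def normalSet (ℓ : ℕ) (Q : Set V) : Set (ℤ × ℤ) :=
  {η | IsCoprime η.1 η.2 ∧ (∀ y ∈ Q, -(ℓ : ℝ) ≤ dotV (realVec η) y) ∧
    ∃ v ∈ vertexSet Q, ∃ v' ∈ vertexSet Q, v ≠ v' ∧ idot η v = -ℓ ∧ idot η v' = -ℓ}

lemma polygon_facts {Q : Set V} (h : IsPolygon Q) :
    IsCompact Q ∧ Convex ℝ Q ∧ (extremePoints ℝ Q).Finite ∧
      Q = convexHull ℝ (extremePoints ℝ Q) := by
  obtain ⟨A, hA, -⟩ := h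
  have hc : IsCompact Q := hA ▸ A.finite_toSet.isCompact_convexHull ℝ
  have hv : Convex ℝ Q := hA ▸ convex_convexHull ℝ _
  have hf : (extremePoints ℝ Q).Finite :=
    A.finite_toSet.subset (hA ▸ extremePoints_convexHull_subset)
  refine ⟨hc, hv, hf, ?_⟩
  have := closure_convexHull_extremePoints hc hv
  rw [(hf.isCompact_convexHull ℝ).isClosed.closure_eq] at this
  exact this.symm

section Reflexive

variable {ℓ : ℕ} {Q : Set V}

lemma exists_vertexSet (hQ : IsLReflexive ℓ Q) {v : V} (hv : v ∈ extremePoints ℝ Q) :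
    ∃ p ∈ vertexSet Q, v = realVec p := by
  obtain ⟨p, hp⟩ := (hQ.vertices_primitive v hv).1
  change v = realVec p at hp
  exact ⟨p, show realVec p ∈ extremePoints ℝ Q from hp ▸ hv, hp⟩

lemma vertexSet_coprime (hQ : IsLReflexive ℓ Q) {v : ℤ × ℤ} (hv : v ∈ vertexSet Q) :
    IsCoprime v.1 v.2 :=
  coprime_of_isPrimitive (hQ.vertices_primitive _ hv)

lemma vertexSet_finite (hQ : IsLReflexive ℓ Q) : (vertexSet Q).Finite :=
  finite_of_bounded (polygon_facts hQ.polygon).1.isBounded fun _ hp => hp.1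

/-- The dual polygon is cut out by the vertices of `Q`. -/
lemma dualPolygon_eq (hℓ : 0 < ℓ) (hQ : IsLReflexive ℓ Q) :
    dualPolygon ℓ Q = cutOut ℓ (vertexSet Q) := by
  have hl : (0 : ℝ) < ℓ := by exact_mod_cast hℓ
  obtain ⟨-, -, -, hE⟩ := polygon_facts hQ.polygon
  ext w
  constructor
  · rintro ⟨u, hu, rfl⟩ v hv
    have h1 := hu _ hv.1
    simp only [dotV_smul]
    rw [dotV_comm]
    nlinarith
  · intro hw
    refine ⟨(ℓ : ℝ)⁻¹ • w, ?_, by simp [smul_smul, hl.ne']⟩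
    have hsub : Q ⊆ {y | -(ℓ : ℝ) ≤ dotV w y} := by
      rw [hE]
      refine convexHull_min (fun v hv => ?_) (convex_ge _ _)
      obtain ⟨p, hp, rfl⟩ := exists_vertexSet hQ hv
      rw [mem_ofPred_eq, dotV_comm]
      exact hw p hp
    intro y hy
    rw [dotV_comm, dotV_smul, dotV_comm y w]
    have h1 : -(ℓ : ℝ) ≤ dotV w y := hsub hy
    rw [← mul_le_mul_iff_right₀ hl, mul_inv_cancel_left₀ hl.ne']
    linarith

/-- `Q` is cut out by its primitive edge normals. -/
lemma eq_cutOut_normalSet (hℓ : 0 < ℓ) (hQ : IsLReflexive ℓ Q) :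
    Q = cutOut ℓ (normalSet ℓ Q) := by
  have hl : (0 : ℝ) < ℓ := by exact_mod_cast hℓ
  obtain ⟨hc, hv, hf, hE⟩ := polygon_facts hQ.polygon
  refine Subset.antisymm (fun y hy η hη => hη.2.1 y hy) fun x hx => ?_
  by_contra hxQ
  obtain ⟨u, hu, hux⟩ := exists_extreme_polar hv hc.isClosed hQ.zero_mem_interior hxQ
  obtain ⟨v, hvE, v', hvE', hne, h1, h2⟩ := exists_two_tight hf hE hu
  have hedge : IsEdge Q {y ∈ Q | ∀ z ∈ Q, dotV u y ≤ dotV u z} := by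
    refine ⟨⟨u, ?_, rfl⟩, v, ⟨hvE.1, fun z hz => h1 ▸ hu.1 z hz⟩, v',
      ⟨hvE'.1, fun z hz => h2 ▸ hu.1 z hz⟩, hne⟩
    rintro rfl
    simp [dotV] at h1
  obtain ⟨η, hη, hsub⟩ := hQ.edge_cond _ hedge
  have e1 : dotV η v = -ℓ := hsub ⟨hvE.1, fun z hz => h1 ▸ hu.1 z hz⟩
  have e2 : dotV η v' = -ℓ := hsub ⟨hvE'.1, fun z hz => h2 ▸ hu.1 z hz⟩
  -- `η` and `ℓ • u` agree on the linearly independent vectors `v` and `v'`.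
  have hηu : η = (ℓ : ℝ) • u := by
    rw [← sub_eq_zero]
    refine eq_zero_of_dotV (a := v) (b := v') (v := u) (c := -1) (by norm_num) hne
      (by rw [dotV_comm, h1]) (by rw [dotV_comm, h2]) ?_ ?_
    · rw [dotV_sub, dotV_smul, dotV_comm v η, dotV_comm v u, e1, h1]; ring
    · rw [dotV_sub, dotV_smul, dotV_comm v' η, dotV_comm v' u, e2, h2]; ring
  have hdot : ∀ y, dotV η y = ℓ * dotV u y := by
    intro y
    rw [hηu, dotV_comm, dotV_smul, dotV_comm]
  obtain ⟨p, hp⟩ := hη.1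
  change η = realVec p at hp
  obtain ⟨q, hq, rfl⟩ := exists_vertexSet hQ hvE
  obtain ⟨q', hq', rfl⟩ := exists_vertexSet hQ hvE'
  have hpN : p ∈ normalSet ℓ Q := by
    refine ⟨coprime_of_isPrimitive (hp ▸ hη), fun y hy => ?_, q, hq, q', hq',
      fun h => hne (h ▸ rfl), ?_, ?_⟩
    · rw [← hp, hdot]
      have := hu.1 y hy
      nlinarith
    · rw [hp, dotV_realVec] at e1
      exact_mod_cast e1
    · rw [hp, dotV_realVec] at e2
      exact_mod_cast e2
  have := hx p hpN
  rw [← hp, hdot] at this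
  nlinarith

lemma normalSet_finite (hℓ : 0 < ℓ) (hQ : IsLReflexive ℓ Q) : (normalSet ℓ Q).Finite := by
  have hl : (0 : ℝ) < ℓ := by exact_mod_cast hℓ
  have hb : Bornology.IsBounded (dualPolygon ℓ Q) := by
    refine IsCompact.isBounded ?_
    exact (isCompact_polar hQ.zero_mem_interior).image (by fun_prop)
  refine finite_of_bounded hb fun η hη => ?_
  rw [dualPolygon_eq hℓ hQ]
  intro v hv
  rw [dotV_comm]
  exact hη.2.1 _ hv.1

end Reflexive

/-! ### The lattices generated by boundary points -/

/-- **Lattice change (Kasprzyk–Nill).** -/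
theorem lattice_change (ℓ : ℕ) (hℓ : 0 < ℓ) (Q : Set V) (hQ : IsLReflexive ℓ Q) :
    (latChange Q).index = ℓ ∧
    (latChange (dualPolygon ℓ Q)).index = ℓ ∧
    {x : V | ∀ p ∈ latChange Q, ∃ z : ℤ, dotV x (realVec p) = (z : ℝ)}
      = {x : V | ∃ p ∈ latChange (dualPolygon ℓ Q), x = ((ℓ : ℝ))⁻¹ • realVec p} ∧
    interior Q ∩ embedSubgroup (latChange Q) = {(0 : V)} ∧
    ∀ v ∈ Set.extremePoints ℝ Q,
      segment ℝ (0 : V) v ∩ embedSubgroup (latChange Q) = {(0 : V), v} := by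
  have hl : (0 : ℝ) < ℓ := by exact_mod_cast hℓ
  obtain ⟨hcomp, hconv, -, -⟩ := polygon_facts hQ.polygon
  set N := normalSet ℓ Q with hNdef
  set E := vertexSet Q with hEdef
  have hNfin : N.Finite := normalSet_finite hℓ hQ
  have hEfin : E.Finite := vertexSet_finite hQ
  have hQN : Q = cutOut ℓ N := eq_cutOut_normalSet hℓ hQ
  have hQE : dualPolygon ℓ Q = cutOut ℓ E := dualPolygon_eq hℓ hQ
  have hbdd : Bornology.IsBounded (cutOut ℓ N) := hQN ▸ hcomp.isBounded
  have hEcop : ∀ v ∈ E, IsCoprime v.1 v.2 := fun v hv => vertexSet_coprime hQ hv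
  have hfrQ : ∀ p, p ∈ boundaryLat Q ↔ realVec p ∈ Q ∧ ∃ η ∈ N, idot η p = -ℓ := by
    intro p
    change realVec p ∈ frontier Q ↔ _
    rw [hQN, mem_frontier_cutOut hℓ hNfin]
    simp only [dotV_realVec]
    norm_cast
  have hfrE : ∀ w, w ∈ boundaryLat (dualPolygon ℓ Q) ↔
      realVec w ∈ cutOut ℓ E ∧ ∃ v ∈ E, idot v w = -ℓ := by
    intro p
    change realVec p ∈ frontier (dualPolygon ℓ Q) ↔ _
    rw [hQE, mem_frontier_cutOut hℓ hEfin]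
    simp only [dotV_realVec]
    norm_cast
  -- The cycle of edges, with the common vertex as an integer point.
  have hcycle : ∀ S : Set (ℤ × ℤ), (N ∩ S).Nonempty → (N \ S).Nonempty →
      ∃ η ∈ N ∩ S, ∃ η' ∈ N \ S, ∃ v ∈ E, idot η v = -ℓ ∧ idot η' v = -ℓ := by
    intro S h1 h2
    obtain ⟨η, hη, η', hη', v, hv, e1, e2⟩ := exists_common_vertex hℓ hNfin hbdd (by
      intro η hη
      obtain ⟨v, hv, -, -, -, e, -⟩ := hη.2.2
      refine ⟨realVec v, hQN ▸ hv.1, ?_⟩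
      rw [dotV_realVec, e]; simp) S h1 h2
    rw [← hQN] at hv
    obtain ⟨p, hp, rfl⟩ := exists_vertexSet hQ hv
    rw [dotV_realVec] at e1 e2
    exact ⟨η, hη, η', hη', p, hp, by exact_mod_cast e1, by exact_mod_cast e2⟩
  obtain ⟨η₀, hη₀, -⟩ := exists_neg_of_bounded hbdd (x := (1, 0)) (by simp)
  -- A normal on the opposite side of `η₀`; in particular there are two distinct normals.
  obtain ⟨η₁, hη₁, hη₁neg⟩ := exists_neg_of_bounded hbdd (x := realVec η₀) (by
    obtain ⟨v, -, -, -, -, e, -⟩ := hη₀.2.2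
    intro h
    have := dotV_realVec η₀ v
    rw [h, e] at this
    simp only [dotV, Prod.fst_zero, Prod.snd_zero, zero_mul, add_zero] at this
    push_cast at this
    linarith)
  have hη₁ne : η₁ ≠ η₀ := by
    rintro rfl
    simp only [dotV] at hη₁neg
    nlinarith [mul_self_nonneg (realVec η₁).1, mul_self_nonneg (realVec η₁).2]
  have hall : ∀ η ∈ N, kerMod ℓ η = kerMod ℓ η₀ := by
    by_contra! hcon
    obtain ⟨θ, hθ, hθne⟩ := hcon
    obtain ⟨η, hη, η', hη', v, hv, e1, e2⟩ := hcycle {η | kerMod ℓ η = kerMod ℓ η₀}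
      ⟨η₀, hη₀, rfl⟩ ⟨θ, hθ, hθne⟩
    exact hη'.2 ((kerMod_eq_of_common_vertex hη'.1.1 hη.1.1 (hEcop v hv) e2 e1).trans hη.2)
  have hΛ : latChange Q = kerMod ℓ η₀ := by
    refine le_antisymm ((AddSubgroup.closure_le _).2 fun p hp => ?_) ?_
    · obtain ⟨-, η, hη, e⟩ := (hfrQ p).1 hp
      rw [SetLike.mem_coe, ← hall η hη, mem_kerMod, e]
      exact (dvd_refl _).neg_right
    · obtain ⟨v, hv, v', hv', hne, e1, e2⟩ := hη₀.2.2
      exact kerMod_le_of_edge hconv hη₀.1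
        (fun p hp e => AddSubgroup.subset_closure ((hfrQ p).2 ⟨hp, η₀, hη₀, e⟩))
        hv.1 hv'.1 hne e1 e2
  have hEfr : ∀ v ∈ E, v ∈ boundaryLat Q := by
    intro v hv
    have hvx : realVec v ∈ extremePoints ℝ Q := hv
    change realVec v ∈ frontier Q
    rw [hcomp.isClosed.frontier_eq]
    refine ⟨hvx.1, fun hint => ?_⟩
    -- An interior point `v ≠ 0` lies strictly between `0` and some `t • v ∈ Q`.
    obtain ⟨t, ht, htQ⟩ := exists_gt_one_smul_mem hint
    have ht0 : 0 < t := by linarith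
    refine (hQ.vertices_primitive _ hvx).2.1
      ((mem_extremePoints_iff_left.1 hvx).2 0 (interior_subset hQ.zero_mem_interior) _ htQ
        ⟨1 - t⁻¹, t⁻¹, sub_pos.2 (inv_lt_one_of_one_lt₀ ht), by positivity, by ring, ?_⟩).symm
    rw [smul_zero, zero_add, smul_smul, inv_mul_cancel₀ ht0.ne', one_smul]
  have hEΛ : ∀ v ∈ E, v ∈ latChange Q := fun v hv => AddSubgroup.subset_closure (hEfr v hv)
  have hdual : ∀ v ∈ E, ∀ w, w ∈ kerMod ℓ v ↔ ∀ p ∈ latChange Q, (ℓ : ℤ) ∣ idot w p := by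
    intro v hv w
    constructor
    · intro hw p hp
      have hvΛ := hEΛ v hv
      rw [hΛ, mem_kerMod] at hvΛ hp
      rw [mem_kerMod, idot_comm] at hw
      exact dvd_idot_of_dvd_det (hEcop v hv) hw (dvd_det hη₀.1 hvΛ hp)
    · intro h
      rw [mem_kerMod, idot_comm]
      exact h v (hEΛ v hv)
  obtain ⟨η, hη, η', hη', v₀, hv₀, e1, e2⟩ := hcycle {η₀} ⟨η₀, hη₀, rfl⟩ ⟨η₁, hη₁, hη₁ne⟩
  have hNdual : ∀ η ∈ N, realVec η ∈ cutOut ℓ E := by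
    intro η hη v hv
    rw [dotV_comm]
    exact hη.2.1 _ hv.1
  have hΛ' : latChange (dualPolygon ℓ Q) = kerMod ℓ v₀ := by
    refine le_antisymm ((AddSubgroup.closure_le _).2 fun w hw => ?_) ?_
    · obtain ⟨-, v, hv, e⟩ := (hfrE w).1 hw
      have hwv : w ∈ kerMod ℓ v := by
        rw [mem_kerMod, e]
        exact (dvd_refl _).neg_right
      exact (hdual v₀ hv₀ w).2 ((hdual v hv w).1 hwv)
    · exact kerMod_le_of_edge (convex_cutOut ℓ E) (hEcop v₀ hv₀)
        (fun p hp e => AddSubgroup.subset_closure ((hfrE p).2 ⟨hp, v₀, hv₀, e⟩))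
        (hNdual η hη.1) (hNdual η' hη'.1) (fun h => hη'.2 (h ▸ hη.2))
        (by rw [idot_comm, e1]) (by rw [idot_comm, e2])
  refine ⟨?_, ?_, ?_, ?_, ?_⟩
  · rw [hΛ, index_kerMod ℓ hη₀.1]
  · rw [hΛ', index_kerMod ℓ (hEcop v₀ hv₀)]
  · ext x
    simp only [mem_ofPred_eq]
    rw [hΛ']
    constructor
    · intro hx
      -- `Λ_Q` contains `ℓ • ℤ²`, so `ℓ • x` is integral.
      obtain ⟨z₁, hz₁⟩ := hx (ℓ, 0) (by rw [hΛ, mem_kerMod]; simp [idot])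
      obtain ⟨z₂, hz₂⟩ := hx (0, ℓ) (by rw [hΛ, mem_kerMod]; simp [idot])
      simp only [dotV, realVec, Int.cast_natCast, Int.cast_zero, mul_zero, add_zero,
        zero_add] at hz₁ hz₂
      refine ⟨(z₁, z₂), (hdual v₀ hv₀ _).2 fun p hp => ?_, ?_⟩
      · obtain ⟨z, hz⟩ := hx p hp
        refine ⟨z, ?_⟩
        have : ((idot (z₁, z₂) p : ℤ) : ℝ) = ℓ * z := by
          rw [← hz]
          simp only [idot, dotV, realVec]
          push_cast
          rw [← hz₁, ← hz₂]; ring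
        exact_mod_cast this
      · ext
        · simp [realVec, ← hz₁]; field_simp
        · simp [realVec, ← hz₂]; field_simp
    · rintro ⟨w, hw, rfl⟩ p hp
      obtain ⟨z, hz⟩ := (hdual v₀ hv₀ w).1 hw p hp
      refine ⟨z, ?_⟩
      rw [dotV_comm, dotV_smul, dotV_comm, dotV_realVec, hz]
      push_cast
      rw [inv_mul_cancel_left₀ hl.ne']
  · ext x
    rw [mem_singleton_iff]
    constructor
    · rintro ⟨hint, p, hp, rfl⟩
      by_contra hne
      obtain ⟨θ, hθ, hneg⟩ := exists_neg_of_bounded hbdd hne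
      rw [hQN] at hint
      have h1 := (mem_interior_cutOut hℓ hNfin).1 hint θ hθ
      rw [hΛ, ← hall θ hθ, mem_kerMod] at hp
      obtain ⟨c, hc⟩ := hp
      rw [dotV_realVec] at h1 hneg
      have h1' : -(ℓ : ℤ) < idot θ p := by exact_mod_cast h1
      have h2' : idot θ p < 0 := by exact_mod_cast hneg
      -- A multiple of `ℓ` strictly between `-ℓ` and `0`.
      have hlz : (0 : ℤ) < ℓ := by exact_mod_cast hℓ
      rw [hc] at h1' h2'
      have hc0 : c < 0 := by
        by_contra! h
        nlinarith
      have hc1 : c ≤ -1 := by omega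
      nlinarith
    · rintro rfl
      exact ⟨hQ.zero_mem_interior, 0, AddSubgroup.zero_mem _, realVec_zero.symm⟩
  · intro v hv
    obtain ⟨p, hp, rfl⟩ := exists_vertexSet hQ hv
    have hseg := (hQ.vertices_primitive _ hv).2.2
    refine Subset.antisymm ?_ ?_
    · rintro x ⟨hx, q, -, rfl⟩
      rw [← hseg]
      exact ⟨hx, q, rfl⟩
    · rintro x (rfl | rfl)
      · exact ⟨left_mem_segment _ _ _, 0, AddSubgroup.zero_mem _, realVec_zero.symm⟩
      · exact ⟨right_mem_segment _ _ _, p, hEΛ p hp, rfl⟩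
end
end
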